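/- arXiv:1407.0692 — 2 statements merged into one kernel-verified Lean document; each statement's English description precedes it below -/
import Mathlib

section
/- Let L' ⊂ ℝ³ be a nonempty set such that for each z ∈ L': (1) |z − z'| ≥ 1 for all z' ∈ L'\{z}; (2) there are exactly 12 points z' ∈ L' with |z − z'| = 1; (3) there are exactly 48 ordered pairs (z₁, z₂) of points of L' with |z₁ − z₂| = 1 and |z − z₁| = |z − z₂| = 1; (4) there are exactly 48 ordered pairs (z₁, z₂) of points of L' with |z₁ − z₂| = √3 and |z − z₁| = |z − z₂| = 1. Then there exist a rotation R ∈ SO(3) and a translation t ∈ ℝ³ such that R·L' + t = L_fcc. -/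
/-!
The twelve difference vectors at a point of `L'` form a set `C` of unit vectors with mutual angles
at least `60°`, with `48` ordered pairs at `60°` and `48` at `120°` (`Kiss`). The core of the proof
is that such a `C` is closed under differences of vectors at `60°` (`Kiss.local_structure`), as the
vertices of the cuboctahedron are; the global part then takes a few lines.

Fix `x ∈ C`. The vectors at `60°` and at `120°` to `x`, projected along `x` and rescaled, become
sets `U`, `V` on the unit circle in which distinct points are at angular distance at least
`arccos (1/3)`. Pairs at `60°` or `120°` inside these two layers correspond to pairs on the circle
differing by one of a few fixed rotations, so they are counted by numbers `hit a U V`. A linear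
programming bound gives `|U|, |V| ≤ 5`, and a five-point separated set has no two opposite points.
Counting all pairs at `120°` yields `|U| + |V| ≤ 8`; summed over `x` this is an equality, because
the `48 + 48` pairs give an average of `8`. Counting pairs at `60°` then excludes `|U| = 5`, and
averaging again gives `|U| = |V| = 4` at every `x`. For these values both counts are tight enough
to force `U = V = -U` and a pair of points of `U` at angle exactly `arccos (1/3)` (`four_four`).
Back in space, `U = V` and `U = -U` say that `y - x` and `x - y` lie in `C` whenever `y ∈ C` is at
`60°` to `x`, and the pair at angle `arccos (1/3)` gives a triple `a, b, c` of vectors of `C` at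
mutual angles `60°`. In particular `C = -C`.

If `z ∈ L'` has the neighbours `z ± a`, `z ± b`, `z ± c`, closure under differences at `z + a`
shows that `z + a` has the neighbours `z + a ± a`, `z + a ± b`, `z + a ± c` (`FrameStar.step`).
Hence `L'` contains `z + ℤa + ℤb + ℤc`, a congruent copy of the fcc lattice. Every point of space is
at distance less than `1` from that copy (`exists_near`), so by the separation hypothesis `L'` has
no further points. Replacing the triple by its negative corrects the sign of the determinant.
-/

open scoped BigOperators
open scoped Classical

noncomputable section

abbrev E3 := EuclideanSpace ℝ (Fin 3)

/-- Interpret a plain vector in `Fin 3 → ℝ` as a point of Euclidean 3-space. -/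
def toE3 (v : Fin 3 → ℝ) : E3 := (WithLp.equiv 2 (Fin 3 → ℝ)).symm v

/-- The basis vectors `b₁ = (0,1,1)/√2`, `b₂ = (1,0,1)/√2`, `b₃ = (1,1,0)/√2` of the
face-centered cubic lattice. -/
def fccB : Fin 3 → E3 := fun i =>
  (Real.sqrt 2)⁻¹ • toE3 (![![(0:ℝ),1,1], ![1,0,1], ![1,1,0]] i)

/-- The face-centered cubic lattice `L_fcc`. -/
def Lfcc : Set E3 := {x | ∃ a : Fin 3 → ℤ, x = ∑ i, (a i : ℝ) • fccB i}

/-! ### Separated sets on the unit circle -/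

open ComplexConjugate

/-- The unit complex number of argument `arccos (1/3)`, the dihedral angle of the regular
tetrahedron. -/
def om : ℂ := ⟨1 / 3, 2 * √2 / 3⟩

/-- A finite set of unit complex numbers at pairwise angular distance at least `arccos (1/3)`. -/
def ArcSep (U : Finset ℂ) : Prop :=
  (∀ u ∈ U, u.re ^ 2 + u.im ^ 2 = 1) ∧
    ∀ u ∈ U, ∀ v ∈ U, u ≠ v → (u * conj v).re ≤ 1 / 3

/-- The number of pairs in `U × V` whose members make an angle with cosine `c`. -/
def cnt (c : ℝ) (U V : Finset ℂ) : ℕ :=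
  ∑ u ∈ U, ∑ v ∈ V, if (u * conj v).re = c then 1 else 0

/-- The number of `u ∈ U` with `a * u ∈ V`. -/
def hit (a : ℂ) (U V : Finset ℂ) : ℕ := ∑ u ∈ U, if a * u ∈ V then 1 else 0

lemma om_sq : om.re ^ 2 + om.im ^ 2 = 1 := by
  have h : √2 ^ 2 = 2 := Real.sq_sqrt (by norm_num)
  simp only [om]; nlinarith

lemma om_re : om.re = 1 / 3 := rfl

lemma om_im_pos : 0 < om.im := by
  have : 0 < √2 := by positivity
  simp only [om]; positivity

lemma om_mul_conj : om * conj om = 1 := by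
  have := om_sq
  apply Complex.ext <;> simp [← sq] <;> linarith

lemma om_ne_conj : om ≠ conj om := by
  intro h
  have := congrArg Complex.im h
  have h2 := om_im_pos
  simp at this; linarith

lemma mul_conj_eq {v : ℂ} (hv : v.re ^ 2 + v.im ^ 2 = 1) : v * conj v = 1 := by
  apply Complex.ext <;> simp [← sq] <;> linarith

lemma unit_mul {u v : ℂ} (hu : u.re ^ 2 + u.im ^ 2 = 1) (hv : v.re ^ 2 + v.im ^ 2 = 1) :
    (u * v).re ^ 2 + (u * v).im ^ 2 = 1 := by
  simp only [Complex.mul_re, Complex.mul_im]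
  linear_combination hv + (v.re ^ 2 + v.im ^ 2) * hu

lemma unit_conj {u : ℂ} (hu : u.re ^ 2 + u.im ^ 2 = 1) :
    (conj u).re ^ 2 + (conj u).im ^ 2 = 1 := by simpa using hu

lemma re_third_iff {z : ℂ} (hz : z.re ^ 2 + z.im ^ 2 = 1) :
    z.re = 1 / 3 ↔ z = om ∨ z = conj om := by
  constructor
  · intro h
    have h1 : (z.im - om.im) * (z.im + om.im) = 0 := by
      have := om_sq; rw [om_re] at this; rw [h] at hz; nlinarith
    rcases mul_eq_zero.mp h1 with h2 | h2
    · left; apply Complex.ext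
      · rw [h, om_re]
      · linarith
    · right; apply Complex.ext
      · rw [h, Complex.conj_re, om_re]
      · rw [Complex.conj_im]; linarith
  · rintro (rfl | rfl)
    · exact om_re
    · rw [Complex.conj_re, om_re]

lemma mul_conj_eq_iff {u v w : ℂ} (hv : v.re ^ 2 + v.im ^ 2 = 1) :
    u * conj v = w ↔ u = w * v := by
  have := mul_conj_eq hv
  constructor
  · rintro rfl; linear_combination (-u) * this
  · rintro rfl; linear_combination w * this

lemma third_iff {u v : ℂ} (hu : u.re ^ 2 + u.im ^ 2 = 1) (hv : v.re ^ 2 + v.im ^ 2 = 1) :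
    (u * conj v).re = 1 / 3 ↔ u = om * v ∨ u = conj om * v := by
  rw [re_third_iff (unit_mul hu (unit_conj hv)), mul_conj_eq_iff hv, mul_conj_eq_iff hv]

lemma neg_third_iff {u v : ℂ} (hu : u.re ^ 2 + u.im ^ 2 = 1) (hv : v.re ^ 2 + v.im ^ 2 = 1) :
    (u * conj v).re = -(1 / 3) ↔ u = -om * v ∨ u = -conj om * v := by
  have h := third_iff (u := -u) (v := v) (by simpa using hu) hv
  rw [neg_mul, Complex.neg_re, neg_eq_iff_eq_neg] at h
  rw [h, neg_eq_iff_eq_neg, neg_eq_iff_eq_neg, neg_mul, neg_mul]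

lemma one_iff {u v : ℂ} (hu : u.re ^ 2 + u.im ^ 2 = 1) (hv : v.re ^ 2 + v.im ^ 2 = 1) :
    (u * conj v).re = 1 ↔ u = v := by
  constructor
  · intro h
    simp only [Complex.mul_re, Complex.conj_re, Complex.conj_im] at h
    have h1 : (u.re - v.re) ^ 2 + (u.im - v.im) ^ 2 = 0 := by nlinarith
    apply Complex.ext <;> nlinarith [sq_nonneg (u.re - v.re), sq_nonneg (u.im - v.im)]
  · rintro rfl; rw [mul_conj_eq hu]; simp

lemma neg_one_iff {u v : ℂ} (hu : u.re ^ 2 + u.im ^ 2 = 1) (hv : v.re ^ 2 + v.im ^ 2 = 1) :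
    (u * conj v).re = -1 ↔ u = -1 * v := by
  have h := one_iff (u := -u) (v := v) (by simpa using hu) hv
  rw [neg_mul, Complex.neg_re, neg_eq_iff_eq_neg] at h
  rw [h, neg_eq_iff_eq_neg, neg_one_mul]

/-- If the cosine `c` is attained exactly by the two rotations `a` and `b`, then `cnt` splits into
the corresponding two hit numbers. -/
lemma cnt_two {c : ℝ} {a b : ℂ} {U V : Finset ℂ} (hab : a ≠ b)
    (hV : ∀ v ∈ V, v ≠ 0)
    (h : ∀ u ∈ U, ∀ v ∈ V, ((u * conj v).re = c ↔ u = a * v ∨ u = b * v)) :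
    cnt c U V = hit a V U + hit b V U := by
  unfold cnt hit
  rw [Finset.sum_comm, ← Finset.sum_add_distrib]
  refine Finset.sum_congr rfl fun v hv => ?_
  have : ∀ u ∈ U, (if (u * conj v).re = c then 1 else 0) =
      (if u = a * v then 1 else 0) + (if u = b * v then 1 else 0) := by
    intro u hu
    rw [if_congr (h u hu v hv) rfl rfl]
    by_cases h1 : u = a * v
    · have h2 : u ≠ b * v := fun h2 => hab (mul_right_cancel₀ (hV v hv) (h1.symm.trans h2))
      rw [if_pos (Or.inl h1), if_pos h1, if_neg h2]
    · simp [h1]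
  rw [Finset.sum_congr rfl this, Finset.sum_add_distrib]
  simp [Finset.sum_ite_eq']

lemma cnt_one' {c : ℝ} {a : ℂ} {U V : Finset ℂ}
    (h : ∀ u ∈ U, ∀ v ∈ V, ((u * conj v).re = c ↔ u = a * v)) :
    cnt c U V = hit a V U := by
  unfold cnt hit
  rw [Finset.sum_comm]
  refine Finset.sum_congr rfl fun v hv => ?_
  rw [Finset.sum_congr rfl (fun u hu => by rw [if_congr (h u hu v hv) rfl rfl])]
  simp [Finset.sum_ite_eq']

lemma hit_card (a : ℂ) (U V : Finset ℂ) : hit a U V = (U.filter (fun u => a * u ∈ V)).card := by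
  unfold hit; rw [Finset.card_filter]

lemma hit_swap {a b : ℂ} (hab : a * b = 1) (U V : Finset ℂ) : hit a U V = hit b V U := by
  rw [hit_card, hit_card]
  refine Finset.card_bij (fun u _ => a * u) ?_ ?_ ?_
  · intro u hu
    rw [Finset.mem_filter] at hu ⊢
    refine ⟨hu.2, ?_⟩
    rw [show b * (a * u) = u by linear_combination u * hab]; exact hu.1
  · intro u _ v _ h
    have : b * (a * u) = b * (a * v) := by rw [h]
    linear_combination this - u * hab + v * hab
  · intro v hv
    rw [Finset.mem_filter] at hv
    refine ⟨b * v, ?_, by linear_combination v * hab⟩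
    rw [Finset.mem_filter]
    refine ⟨hv.2, ?_⟩
    rw [show a * (b * v) = v by linear_combination v * hab]; exact hv.1

lemma hit_le (a : ℂ) (U V : Finset ℂ) : hit a U V ≤ U.card := by
  rw [hit_card]; exact Finset.card_filter_le _ _

lemma unit_ne_zero {u : ℂ} (hu : u.re ^ 2 + u.im ^ 2 = 1) : u ≠ 0 := by
  rintro rfl; simp at hu

lemma ArcSep.ne_zero {U : Finset ℂ} (hU : ArcSep U) : ∀ v ∈ U, v ≠ 0 :=
  fun v hv => unit_ne_zero (hU.1 v hv)

lemma cnt_third {U : Finset ℂ} (hU : ArcSep U) : cnt (1 / 3) U U = 2 * hit om U U := by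
  rw [cnt_two om_ne_conj hU.ne_zero (fun u hu v hv => third_iff (hU.1 u hu) (hU.1 v hv)),
    hit_swap (a := conj om) (b := om) (by rw [mul_comm]; exact om_mul_conj)]
  ring

lemma cnt_neg_third {U V : Finset ℂ} (hU : ArcSep U) (hV : ArcSep V) :
    cnt (-(1 / 3)) U V = hit (-om) V U + hit (-conj om) V U :=
  cnt_two (fun h => om_ne_conj (neg_injective h)) hV.ne_zero
    (fun u hu v hv => neg_third_iff (hU.1 u hu) (hV.1 v hv))

lemma cnt_neg_one {U V : Finset ℂ} (hU : ArcSep U) (hV : ArcSep V) : cnt (-1) U V = hit (-1) V U :=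
  cnt_one' (fun u hu v hv => neg_one_iff (hU.1 u hu) (hV.1 v hv))

lemma cnt_one {U V : Finset ℂ} (hU : ArcSep U) (hV : ArcSep V) : cnt 1 U V = hit 1 V U :=
  cnt_one' (fun u hu v hv => by rw [one_mul]; exact one_iff (hU.1 u hu) (hV.1 v hv))

/-- At most five points: the linear programming bound on the circle, with the test polynomial
`(t - 1/3) (t + 4/5)²`, whose expansion in Chebyshev polynomials has nonnegative coefficients. -/
lemma ArcSep.card_le {U : Finset ℂ} (hU : ArcSep U) : U.card ≤ 5 := by
  have key : ∀ k : ℕ, 0 ≤ ∑ u ∈ U, ∑ v ∈ U, ((u * conj v) ^ k).re := by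
    intro k
    have : ∑ u ∈ U, ∑ v ∈ U, ((u * conj v) ^ k).re =
        ((∑ u ∈ U, u ^ k) * conj (∑ u ∈ U, u ^ k)).re := by
      rw [map_sum, Finset.sum_mul_sum, Complex.re_sum]
      refine Finset.sum_congr rfl fun u _ => ?_
      rw [Complex.re_sum]
      refine Finset.sum_congr rfl fun v _ => ?_
      rw [mul_pow, map_pow]
    rw [this, Complex.mul_conj, Complex.ofReal_re]
    exact Complex.normSq_nonneg _
  have hpt : ∀ u ∈ U, ∀ v ∈ U, 21 / 50 + (8 / 75 + 3 / 4) * ((u * conj v) ^ 1).re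
      + 19 / 30 * ((u * conj v) ^ 2).re + 1 / 4 * ((u * conj v) ^ 3).re ≤
      if u = v then 54 / 25 else 0 := by
    intro u hu v hv
    have h1 := unit_mul (hU.1 u hu) (unit_conj (hU.1 v hv))
    have h2 : 21 / 50 + (8 / 75 + 3 / 4) * ((u * conj v) ^ 1).re
      + 19 / 30 * ((u * conj v) ^ 2).re + 1 / 4 * ((u * conj v) ^ 3).re =
        ((u * conj v).re - 1 / 3) * ((u * conj v).re + 4 / 5) ^ 2 := by
      generalize u * conj v = w at h1
      simp only [pow_succ, pow_zero, one_mul, Complex.mul_re, Complex.mul_im]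
      linear_combination (-19/30 - 3/4 * w.re) * h1
    rw [h2]
    split_ifs with h
    · subst h
      rw [mul_conj_eq (hU.1 u hu)]; norm_num
    · exact mul_nonpos_of_nonpos_of_nonneg (by linarith [hU.2 u hu v hv h]) (sq_nonneg _)
  have hs := Finset.sum_le_sum fun u hu => Finset.sum_le_sum fun v hv => hpt u hu v hv
  simp only [Finset.sum_add_distrib, ← Finset.mul_sum, Finset.sum_const, nsmul_eq_mul,
    Finset.sum_ite_eq] at hs
  rw [Finset.sum_congr rfl (fun u hu => if_pos hu)] at hs
  simp only [Finset.sum_const, nsmul_eq_mul] at hs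
  have k1 := key 1
  have k2 := key 2
  have k3 := key 3
  by_contra hc
  have hc' : (6 : ℝ) ≤ U.card := by exact_mod_cast (by omega : 6 ≤ U.card)
  nlinarith

/-- A separated set that contains two opposite points has at most four points, because each of
the two half-circles between them has room for one more. -/
lemma ArcSep.card_le_of_antipodal {U : Finset ℂ} (hU : ArcSep U) {u : ℂ} (hu : u ∈ U)
    (hu' : -u ∈ U) : U.card ≤ 4 := by
  have huu := hU.1 u hu
  have hs : ∀ w ∈ U, w ≠ u → w ≠ -u → -(1/3) ≤ (w * conj u).re ∧ (w * conj u).re ≤ 1/3 := by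
    intro w hw h1 h2
    have a := hU.2 w hw u hu h1
    have b := hU.2 w hw (-u) hu' h2
    simp only [map_neg, mul_neg, Complex.neg_re] at b
    constructor <;> linarith
  -- two remaining points on the same side of the line through `u` coincide
  have same : ∀ w ∈ U, ∀ w' ∈ U, w ≠ u → w ≠ -u → w' ≠ u → w' ≠ -u →
      0 ≤ (w * conj u).im * (w' * conj u).im → w = w' := by
    intro w hw w' hw' h1 h2 h3 h4 h5
    by_contra hne
    have h6 := hU.2 w hw w' hw' hne
    have a := hs w hw h1 h2
    have b := hs w' hw' h3 h4
    have ha := unit_mul (hU.1 w hw) (unit_conj huu)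
    have hb := unit_mul (hU.1 w' hw') (unit_conj huu)
    have h7 : (w * conj w').re = (w * conj u).re * (w' * conj u).re
        + (w * conj u).im * (w' * conj u).im := by
      simp only [Complex.mul_re, Complex.mul_im, Complex.conj_re, Complex.conj_im]
      linear_combination (-(w.re * w'.re + w.im * w'.im)) * huu
    rw [h7] at h6
    generalize (w * conj u).re = p at *
    generalize (w * conj u).im = q at *
    generalize (w' * conj u).re = p' at *
    generalize (w' * conj u).im = q' at *
    have e1 : 8 / 9 ≤ q ^ 2 := by nlinarith
    have e2 : 8 / 9 ≤ q' ^ 2 := by nlinarith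
    have e3 : (8 / 9) ^ 2 ≤ (q * q') ^ 2 := by nlinarith
    have e4 : 8 / 9 ≤ q * q' := by nlinarith
    nlinarith
  have hcov : U ⊆ {u, -u} ∪ ((U \ {u, -u}).filter (fun w => 0 ≤ (w * conj u).im) ∪
      (U \ {u, -u}).filter (fun w => ¬ 0 ≤ (w * conj u).im)) := by
    intro w hw
    rw [Finset.filter_union_filter_not_eq]
    simp only [Finset.mem_union, Finset.mem_sdiff]; tauto
  have c1 : ((U \ {u, -u}).filter (fun w => 0 ≤ (w * conj u).im)).card ≤ 1 := by
    rw [Finset.card_le_one]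
    intro a ha b hb
    simp only [Finset.mem_filter, Finset.mem_sdiff, Finset.mem_insert, Finset.mem_singleton,
      not_or] at ha hb
    exact same a ha.1.1 b hb.1.1 ha.1.2.1 ha.1.2.2 hb.1.2.1 hb.1.2.2 (mul_nonneg ha.2 hb.2)
  have c2 : ((U \ {u, -u}).filter (fun w => ¬ 0 ≤ (w * conj u).im)).card ≤ 1 := by
    rw [Finset.card_le_one]
    intro a ha b hb
    simp only [Finset.mem_filter, Finset.mem_sdiff, Finset.mem_insert, Finset.mem_singleton,
      not_or, not_le] at ha hb
    exact same a ha.1.1 b hb.1.1 ha.1.2.1 ha.1.2.2 hb.1.2.1 hb.1.2.2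
      (mul_nonneg_of_nonpos_of_nonpos ha.2.le hb.2.le)
  have c3 : ({u, -u} : Finset ℂ).card ≤ 2 := Finset.card_le_two
  have := Finset.card_le_card hcov
  have := Finset.card_union_le {u, -u} ((U \ {u, -u}).filter (fun w => 0 ≤ (w * conj u).im) ∪
      (U \ {u, -u}).filter (fun w => ¬ 0 ≤ (w * conj u).im))
  have := Finset.card_union_le ((U \ {u, -u}).filter (fun w => 0 ≤ (w * conj u).im))
      ((U \ {u, -u}).filter (fun w => ¬ 0 ≤ (w * conj u).im))
  omega

/-! ### Rotations by `arccos (1/3)` and the extremal four-point sets -/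

lemma om_pow_re : (om ^ 2).re = -(7 / 9) ∧ (om ^ 3).re = -(23 / 27) ∧ (om ^ 4).re = 17 / 81 ∧
    (om ^ 5).re = 241 / 243 := by
  have h := om_sq
  rw [om_re] at h
  have h2 : om.im ^ 2 = 8 / 9 := by linarith
  refine ⟨?_, ?_, ?_, ?_⟩ <;>
  simp only [pow_succ, pow_zero, one_mul, Complex.mul_re, Complex.mul_im, om_re]
  · linear_combination -h2
  · linear_combination -h2
  · linear_combination (om.im ^ 2 + 2 / 9) * h2
  · linear_combination (5 / 3 * om.im ^ 2 + 10 / 9) * h2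

lemma om_ne_zero : om ≠ 0 := unit_ne_zero om_sq

lemma om_pow_ne_one {k : ℕ} (h0 : 0 < k) (h5 : k ≤ 5) : om ^ k ≠ 1 := by
  obtain ⟨h2, h3, h4, h5'⟩ := om_pow_re
  intro h
  have h' := congrArg Complex.re h
  interval_cases k
  · rw [pow_one, om_re] at h'; norm_num at h'
  · rw [h2] at h'; norm_num at h'
  · rw [h3] at h'; norm_num at h'
  · rw [h4] at h'; norm_num at h'
  · rw [h5'] at h'; norm_num at h'

lemma om_pow_ne_neg_one {k : ℕ} (h3 : k ≤ 3) : om ^ k ≠ -1 := by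
  obtain ⟨h2, h3', -, -⟩ := om_pow_re
  intro h
  have h' := congrArg Complex.re h
  interval_cases k
  · norm_num at h'
  · rw [pow_one, om_re] at h'; norm_num at h'
  · rw [h2] at h'; norm_num at h'
  · rw [h3'] at h'; norm_num at h'

lemma om_pow_inj {i j : ℕ} (hi : i ≤ 5) (hj : j ≤ 5) (h : om ^ i = om ^ j) : i = j := by
  wlog hij : i ≤ j generalizing i j
  · exact (this hj hi h.symm (by omega)).symm
  by_contra hne
  obtain ⟨d, rfl⟩ := Nat.exists_eq_add_of_le hij
  rw [pow_add] at h
  have h1 : om ^ i * 1 = om ^ i * om ^ d := by rw [mul_one]; exact h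
  exact om_pow_ne_one (by omega) (by omega) (mul_left_cancel₀ (pow_ne_zero i om_ne_zero) h1).symm

lemma om_pow_ne_neg {i j : ℕ} (hi : i ≤ 3) (hj : j ≤ 3) : om ^ i ≠ -om ^ j := by
  intro h
  wlog hij : i ≤ j generalizing i j
  · exact this hj hi (by rw [h, neg_neg]) (by omega)
  obtain ⟨d, rfl⟩ := Nat.exists_eq_add_of_le hij
  rw [pow_add] at h
  have h1 : om ^ i * om ^ d = om ^ i * (-1) := by linear_combination h
  exact om_pow_ne_neg_one (by omega) (mul_left_cancel₀ (pow_ne_zero i om_ne_zero) h1)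

/-- A nonempty separated set is not invariant under the rotation by `arccos (1/3)`, since five
such rotations nearly close up. -/
lemma ArcSep.hit_om_lt {U : Finset ℂ} (hU : ArcSep U) (hne : U.Nonempty) :
    hit om U U + 1 ≤ U.card := by
  by_contra hc
  have h1 := hit_le om U U
  have h2 : (U.filter (fun u => om * u ∈ U)).card = U.card := by rw [← hit_card]; omega
  have h3 := Finset.filter_card_eq h2
  obtain ⟨t, ht⟩ := hne
  have h4 : om ^ 5 * t ∈ U := by
    have := h3 _ (h3 _ (h3 _ (h3 _ (h3 t ht))))
    convert this using 1; ring
  have h5 : om ^ 5 * t ≠ t := by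
    intro h
    exact om_pow_ne_one (k := 5) (by norm_num) le_rfl
      (mul_right_cancel₀ (hU.ne_zero t ht) (by rw [h, one_mul]))
  have h6 := hU.2 _ h4 _ ht h5
  rw [mul_assoc, mul_conj_eq (hU.1 t ht), mul_one, om_pow_re.2.2.2] at h6
  norm_num at h6

/-- If `S` has no two opposite points, then each opposite pair of `T` loses one of its two
possible hits in `S`. -/
lemma hit_antipodal (a : ℂ) {S : Finset ℂ} (T : Finset ℂ) (hS : ∀ s ∈ S, -s ∉ S) :
    2 * hit a T S + hit (-1) T T ≤ 2 * T.card := by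
  set T' := T.filter (fun t => -1 * t ∈ T) with hT'
  have hsplit : hit a T S = ∑ t ∈ T', (if a * t ∈ S then 1 else 0) +
      ∑ t ∈ T.filter (fun t => ¬ (-1 * t ∈ T)), (if a * t ∈ S then 1 else 0) :=
    (Finset.sum_filter_add_sum_filter_not T _ _).symm
  have hcard : T'.card + (T.filter (fun t => ¬ (-1 * t ∈ T))).card = T.card :=
    Finset.card_filter_add_card_filter_not _
  have hB : ∑ t ∈ T.filter (fun t => ¬ (-1 * t ∈ T)), (if a * t ∈ S then 1 else 0) ≤
      (T.filter (fun t => ¬ (-1 * t ∈ T))).card := by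
    rw [Finset.card_eq_sum_ones]
    refine Finset.sum_le_sum fun t _ => ?_
    split_ifs <;> omega
  have hneg : ∑ t ∈ T', (if a * t ∈ S then 1 else 0) =
      ∑ t ∈ T', (if a * -t ∈ S then 1 else 0) := by
    refine Finset.sum_bij' (fun t _ => -t) (fun t _ => -t) ?_ ?_ ?_ ?_ ?_
    · intro t ht; simp only [hT', Finset.mem_filter, neg_one_mul] at ht ⊢
      rw [neg_neg]; exact ⟨ht.2, ht.1⟩
    · intro t ht; simp only [hT', Finset.mem_filter, neg_one_mul] at ht ⊢
      rw [neg_neg]; exact ⟨ht.2, ht.1⟩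
    · intro t _; exact neg_neg t
    · intro t _; exact neg_neg t
    · intro t _; simp only [neg_neg]
  have hA : ∑ t ∈ T', (if a * t ∈ S then 1 else 0) +
      ∑ t ∈ T', (if a * -t ∈ S then 1 else 0) ≤ T'.card := by
    rw [← Finset.sum_add_distrib, Finset.card_eq_sum_ones]
    refine Finset.sum_le_sum fun t _ => ?_
    by_cases h : a * t ∈ S
    · have : a * -t ∉ S := by rw [mul_neg]; exact hS _ h
      simp only [h, this, if_true, if_false]; omega
    · simp only [h, if_false]; split_ifs <;> omega
  have hm : hit (-1) T T = T'.card := hit_card _ _ _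
  omega

/-- If multiplication by `a` keeps at least three points of a four-point set inside the set, then the
set contains a chain `t, at, a²t, a³t`. -/
lemma hit_chain {a : ℂ} (ha : a ≠ 0) {U : Finset ℂ} (hc : U.card = 4) (h : 3 ≤ hit a U U) :
    ∃ t ∈ U, a * t ∈ U ∧ a ^ 2 * t ∈ U ∧ a ^ 3 * t ∈ U := by
  have hinj : Function.Injective (fun u : ℂ => a * u) := mul_right_injective₀ ha
  set T := U.filter (fun u => a * u ∈ U) with hT
  rw [hit_card, ← hT] at h
  have hTU : T ⊆ U := Finset.filter_subset _ _
  have himg : ∀ X ⊆ T, X.image (fun u => a * u) ⊆ U := by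
    intro X hX y hy
    obtain ⟨x, hx, rfl⟩ := Finset.mem_image.mp hy
    exact (Finset.mem_filter.mp (hX hx)).2
  have inter : ∀ X ⊆ U, T.card + X.card ≤ (T ∩ X).card + 4 := by
    intro X hX
    have := Finset.card_union_add_card_inter T X
    have := Finset.card_le_card (Finset.union_subset hTU hX)
    omega
  have c1 := inter _ (himg T (Finset.Subset.refl _))
  rw [Finset.card_image_of_injective _ hinj] at c1
  have c2 := inter _ (himg (T ∩ T.image (fun u => a * u)) Finset.inter_subset_left)
  rw [Finset.card_image_of_injective _ hinj] at c2
  obtain ⟨y, hy⟩ : (T ∩ (T ∩ T.image (fun u => a * u)).image (fun u => a * u)).Nonempty := by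
    rw [← Finset.card_pos]; omega
  rw [Finset.mem_inter, Finset.mem_image] at hy
  obtain ⟨hy, x, hx, rfl⟩ := hy
  rw [Finset.mem_inter, Finset.mem_image] at hx
  obtain ⟨hx, t, ht, rfl⟩ := hx
  refine ⟨t, hTU ht, hTU hx, ?_, ?_⟩
  · convert hTU hy using 1; ring
  · convert (Finset.mem_filter.mp hy).2 using 1; ring

/-- Let `U`, `V` be four-point sets. The quantity in `hB` counts the pairs that come from vectors
at `120°`. When it is at least `16`, the points of `U` cannot form a chain `t, ωt, ω²t, ω³t`: such a
chain has no opposite points, and only `-ωt` and `-ω²t` are counted twice against it, so `V` would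
have to be centrally symmetric and contain `ωt`, which is not counted at all. -/
lemma no_chain {U V : Finset ℂ} (hU : ArcSep U) (cU : U.card = 4) (cV : V.card = 4)
    (hB : 16 ≤ hit (-1) U U + hit (-1) V V + 2 * (hit (-om) V U + hit (-conj om) V U)) :
    hit om U U ≤ 2 := by
  by_contra hc
  obtain ⟨t, ht, ht1, ht2, ht3⟩ := hit_chain om_ne_zero cU (by omega : 3 ≤ hit om U U)
  have t0 : t ≠ 0 := hU.ne_zero t ht
  have hmem : ∀ w ∈ U, ∃ i ≤ 3, w = om ^ i * t := by
    have hsub : (Finset.range 4).image (fun i => om ^ i * t) ⊆ U := by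
      intro w hw
      obtain ⟨i, hi, rfl⟩ := Finset.mem_image.mp hw
      have : i < 4 := Finset.mem_range.mp hi
      interval_cases i
      · simpa using ht
      · simpa using ht1
      · exact ht2
      · exact ht3
    have heq : (Finset.range 4).image (fun i => om ^ i * t) = U := by
      refine Finset.eq_of_subset_of_card_le hsub ?_
      rw [Finset.card_image_of_injOn, Finset.card_range, cU]
      intro i hi j hj hij
      have hi' : i < 4 := by simpa using hi
      have hj' : j < 4 := by simpa using hj
      exact om_pow_inj (by omega) (by omega) (mul_right_cancel₀ t0 hij)
    intro w hw
    rw [← heq] at hw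
    obtain ⟨i, hi, rfl⟩ := Finset.mem_image.mp hw
    exact ⟨i, by have := Finset.mem_range.mp hi; omega, rfl⟩
  have hanti : ∀ w ∈ U, -w ∉ U := by
    intro w hw hw'
    obtain ⟨i, hi, rfl⟩ := hmem w hw
    obtain ⟨j, hj, hij⟩ := hmem _ hw'
    refine om_pow_ne_neg hj hi (mul_right_cancel₀ t0 ?_)
    rw [← hij]; ring
  have hUU : hit (-1) U U = 0 := by
    rw [hit_card, Finset.card_eq_zero, Finset.filter_eq_empty_iff]
    intro w hw; rw [neg_one_mul]; exact hanti w hw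
  have hVV := hit_le (-1) V V
  set V2 := V.filter (fun v => -om * v ∈ U ∧ -conj om * v ∈ U) with hV2
  have hV2sub : V2 ⊆ {-(om * t), -(om ^ 2 * t)} := by
    intro v hv
    rw [hV2, Finset.mem_filter] at hv
    obtain ⟨-, h1, h2⟩ := hv
    obtain ⟨i, hi, h1⟩ := hmem _ h1
    obtain ⟨j, hj, h2⟩ := hmem _ h2
    have e1 : -v = om ^ (j + 1) * t := by
      rw [pow_succ, mul_right_comm, ← h2]; linear_combination v * om_mul_conj
    have e2 : om ^ i = om ^ (j + 2) := by
      apply mul_right_cancel₀ t0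
      rw [← h1, show om ^ (j + 2) * t = om * (om ^ (j + 1) * t) by ring, ← e1]; ring
    have e3 : i = j + 2 := om_pow_inj (by omega) (by omega) e2
    have e4 : v = -(om ^ (j + 1) * t) := by rw [← e1, neg_neg]
    rw [Finset.mem_insert, Finset.mem_singleton]
    have : j = 0 ∨ j = 1 := by omega
    rcases this with rfl | rfl
    · left; rw [e4]; simp
    · right; rw [e4]
  have hdeg : ∀ v ∈ V, (if -om * v ∈ U then 1 else 0) + (if -conj om * v ∈ U then 1 else 0) ≤
      1 + (if -om * v ∈ U ∧ -conj om * v ∈ U then 1 else 0) := by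
    intro v _
    split_ifs <;> first | omega | tauto
  have hsum : ∑ v ∈ V, (1 + (if -om * v ∈ U ∧ -conj om * v ∈ U then 1 else 0)) =
      4 + V2.card := by
    rw [Finset.sum_add_distrib, ← Finset.card_filter, ← Finset.card_eq_sum_ones, cV]
  have hhit : hit (-om) V U + hit (-conj om) V U = ∑ v ∈ V,
      ((if -om * v ∈ U then 1 else 0) + (if -conj om * v ∈ U then 1 else 0)) := by
    rw [Finset.sum_add_distrib]; rfl
  have hle := Finset.sum_le_sum hdeg
  have hV2c : V2.card ≤ 2 := (Finset.card_le_card hV2sub).trans Finset.card_le_two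
  have hV2eq : V2 = {-(om * t), -(om ^ 2 * t)} :=
    Finset.eq_of_subset_of_card_le hV2sub (Finset.card_le_two.trans (by omega))
  have hv1 : -(om * t) ∈ V :=
    (Finset.mem_filter.mp (hV2eq ▸ Finset.mem_insert_self _ _ : -(om * t) ∈ V2)).1
  have hVall := Finset.filter_card_eq (s := V) (p := fun v => -1 * v ∈ V)
    (by rw [← hit_card]; omega)
  have hv2 : om * t ∈ V := by simpa using hVall _ hv1
  have hlt := Finset.sum_lt_sum hdeg ⟨om * t, hv2, by
    have e1 : -om * (om * t) ∉ U := by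
      rw [show -om * (om * t) = -(om ^ 2 * t) by ring]; exact hanti _ ht2
    have e2 : -conj om * (om * t) ∉ U := by
      rw [show -conj om * (om * t) = -t by linear_combination (-t) * om_mul_conj]
      exact hanti _ ht
    simp only [e1, e2, if_false]; omega⟩
  omega

/-- The extremal configuration: two separated four-point sets with the maximal number of
relations of both kinds coincide, are centrally symmetric, and contain two points at angle
`arccos (1/3)`. -/
lemma four_four {U V : Finset ℂ} (hU : ArcSep U) (hV : ArcSep V) (cU : U.card = 4)
    (cV : V.card = 4)
    (hA : 8 ≤ hit om U U + hit om V V + hit 1 V U)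
    (hB : 16 ≤ hit (-1) U U + hit (-1) V V + 2 * (hit (-om) V U + hit (-conj om) V U)) :
    U = V ∧ (∀ u ∈ U, -u ∈ U) ∧ ∃ u ∈ U, om * u ∈ U := by
  have hinv : -om * -conj om = 1 := by rw [neg_mul_neg, om_mul_conj]
  have hinv' : -conj om * -om = 1 := by rw [mul_comm]; exact hinv
  have g1 := no_chain hU cU cV hB
  have g2 := no_chain hV cV cU (by rw [hit_swap hinv U V, hit_swap hinv' U V]; omega)
  have g3 := hit_le 1 V U
  have hVU := Finset.filter_card_eq (s := V) (p := fun v => 1 * v ∈ U)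
    (by rw [← hit_card]; omega)
  have hUV : V = U :=
    Finset.eq_of_subset_of_card_le (fun v hv => by simpa using hVU v hv) (by omega)
  subst hUV
  refine ⟨rfl, ?_, ?_⟩
  · have hη : hit (-om) V V ≤ 2 := by
      by_contra hc
      obtain ⟨t, ht, -, -, ht3⟩ := hit_chain (neg_ne_zero.mpr om_ne_zero) cV
        (by omega : 3 ≤ hit (-om) V V)
      have hne : (-om) ^ 3 * t ≠ t := by
        intro h
        have h1 : (-om) ^ 3 = 1 := mul_right_cancel₀ (hV.ne_zero t ht) (by rw [h, one_mul])
        exact om_pow_ne_neg_one (k := 3) le_rfl (by linear_combination -h1)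
      have h6 := hV.2 _ ht3 _ ht hne
      rw [mul_assoc, mul_conj_eq (hV.1 t ht), mul_one, Odd.neg_pow (by decide), Complex.neg_re,
        om_pow_re.2.1] at h6
      norm_num at h6
    have h1 := hit_swap hinv' V V
    have h2 := hit_le (-1) V V
    have := Finset.filter_card_eq (s := V) (p := fun v => -1 * v ∈ V)
      (by rw [← hit_card]; omega)
    intro u hu
    simpa using this u hu
  · have h1 : (V.filter (fun u => om * u ∈ V)).Nonempty := by
      rw [← Finset.card_pos, ← hit_card]; omega
    obtain ⟨u, hu⟩ := h1
    exact ⟨u, (Finset.mem_filter.mp hu).1, (Finset.mem_filter.mp hu).2⟩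

/-! ### The twelve neighbours of a point -/

/-- The number of pairs in `S × T` with inner product `c`. -/
def prs (c : ℝ) (S T : Finset E3) : ℕ :=
  ∑ s ∈ S, ∑ t ∈ T, if inner ℝ s t = c then 1 else 0

/-- The members of `C` with inner product `c` with `x`. -/
def nb (c : ℝ) (C : Finset E3) (x : E3) : Finset E3 := C.filter (fun y => inner ℝ x y = c)

lemma prs_comm (c : ℝ) (S T : Finset E3) : prs c S T = prs c T S := by
  unfold prs
  rw [Finset.sum_comm]
  simp only [real_inner_comm]

lemma prs_union_left (c : ℝ) {S S' : Finset E3} (T : Finset E3) (h : Disjoint S S') :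
    prs c (S ∪ S') T = prs c S T + prs c S' T := Finset.sum_union h

lemma prs_union_right (c : ℝ) {S S' : Finset E3} (T : Finset E3) (h : Disjoint S S') :
    prs c T (S ∪ S') = prs c T S + prs c T S' := by
  rw [prs_comm, prs_union_left c T h, prs_comm c S, prs_comm c S']

lemma prs_eq_sum_nb (c : ℝ) (S C : Finset E3) : prs c S C = ∑ s ∈ S, (nb c C s).card := by
  unfold prs nb
  refine Finset.sum_congr rfl fun s _ => ?_
  rw [Finset.card_filter]

/-- Pairs meeting `C \ D` are counted through the degrees of the members of `C \ D`. -/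
lemma prs_le (c : ℝ) {C D : Finset E3} (h : D ⊆ C) :
    prs c C C ≤ prs c D D + 2 * ∑ r ∈ C \ D, (nb c C r).card := by
  have hC : D ∪ (C \ D) = C := Finset.union_sdiff_of_subset h
  have hd : Disjoint D (C \ D) := Finset.disjoint_sdiff
  have h1 : prs c C C = prs c D C + prs c (C \ D) C := by
    conv_lhs => rw [← hC]
    rw [prs_union_left _ _ hd, hC]
  have h2 : prs c D C = prs c D D + prs c D (C \ D) := by
    conv_lhs => rw [← hC]
    rw [prs_union_right _ _ hd]
  have h3 : prs c (C \ D) C = prs c (C \ D) D + prs c (C \ D) (C \ D) := by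
    conv_lhs => rw [← hC]
    rw [prs_union_right _ _ hd, hC]
  have h4 := prs_comm c D (C \ D)
  rw [← prs_eq_sum_nb]
  omega

/-- Coordinates around an axis: the component of `y` orthogonal to the unit vector `x`, scaled by
`2 / √3` so that vectors at angle `60°` or `120°` to `x` land on the unit circle. -/
lemma exists_link (x : E3) (hx : ‖x‖ = 1) : ∃ φ : E3 → ℂ, ∀ y z : E3,
    inner ℝ y z = inner ℝ x y * inner ℝ x z + 3 / 4 * (φ y * conj (φ z)).re := by
  obtain ⟨b, hb⟩ := Orthonormal.exists_orthonormalBasis_extension_of_card_eq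
    (𝕜 := ℝ) (E := E3) (ι := Fin 3) (by simp) (v := fun _ => x) (s := {0}) (by
      constructor
      · intro i; simpa using hx
      · intro i j hij
        exact absurd (Subsingleton.elim i j) hij)
  have hb0 : b 0 = x := hb 0 rfl
  refine ⟨fun y => ⟨2 / √3 * inner ℝ (b 1) y, 2 / √3 * inner ℝ (b 2) y⟩, fun y z => ?_⟩
  have h := b.sum_inner_mul_inner y z
  rw [Fin.sum_univ_three, hb0, real_inner_comm x y, real_inner_comm (b 1) y,
    real_inner_comm (b 2) y] at h
  have h3 : (2 / √3) ^ 2 = 4 / 3 := by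
    rw [div_pow, Real.sq_sqrt (by norm_num)]; norm_num
  simp only [Complex.mul_re, Complex.conj_re, Complex.conj_im]
  rw [← h]
  linear_combination (-(3 / 4) * (inner ℝ (b 1) y * inner ℝ (b 1) z +
    inner ℝ (b 2) y * inner ℝ (b 2) z)) * h3

lemma eq_of_inner {y z : E3} (h : inner ℝ y y - 2 * inner ℝ y z + inner ℝ z z = (0 : ℝ)) :
    y = z := by
  rw [← sub_eq_zero, ← inner_self_eq_zero (𝕜 := ℝ), inner_sub_left, inner_sub_right,
    inner_sub_right, real_inner_comm y z]
  linarith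

section Link

variable {x : E3} {φ : E3 → ℂ}

lemma link_injOn (hφ : ∀ y z : E3,
    inner ℝ y z = inner ℝ x y * inner ℝ x z + 3 / 4 * (φ y * conj (φ z)).re)
    {S : Finset E3} {s : ℝ} (hS : ∀ y ∈ S, inner ℝ x y = s) : Set.InjOn φ S := by
  intro y hy z hz h
  apply eq_of_inner
  rw [hφ y y, hφ y z, hφ z z, hS y hy, hS z hz, h]; ring

lemma prs_eq_cnt (hφ : ∀ y z : E3,
    inner ℝ y z = inner ℝ x y * inner ℝ x z + 3 / 4 * (φ y * conj (φ z)).re)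
    {S T : Finset E3} {s t c d : ℝ} (hS : ∀ y ∈ S, inner ℝ x y = s)
    (hT : ∀ y ∈ T, inner ℝ x y = t) (hc : c = s * t + 3 / 4 * d) :
    prs c S T = cnt d (S.image φ) (T.image φ) := by
  unfold prs cnt
  rw [Finset.sum_image (link_injOn hφ hS)]
  refine Finset.sum_congr rfl fun y hy => ?_
  rw [Finset.sum_image (link_injOn hφ hT)]
  refine Finset.sum_congr rfl fun z hz => if_congr ?_ rfl rfl
  rw [hφ y z, hS y hy, hT z hz, hc]
  constructor <;> intro h <;> linarith

lemma link_sep (hφ : ∀ y z : E3,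
    inner ℝ y z = inner ℝ x y * inner ℝ x z + 3 / 4 * (φ y * conj (φ z)).re)
    {S : Finset E3} {s : ℝ} (hs : s ^ 2 = 1 / 4) (hS : ∀ y ∈ S, inner ℝ x y = s)
    (hu : ∀ y ∈ S, ‖y‖ = 1) (hsep : ∀ y ∈ S, ∀ z ∈ S, y ≠ z → inner ℝ y z ≤ (1 / 2 : ℝ)) :
    ArcSep (S.image φ) := by
  constructor
  · intro u hu'
    obtain ⟨y, hy, rfl⟩ := Finset.mem_image.mp hu'
    have h := hφ y y
    rw [real_inner_self_eq_norm_sq, hu y hy, hS y hy] at h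
    simp only [Complex.mul_re, Complex.conj_re, Complex.conj_im] at h
    nlinarith
  · intro u hu' v hv' hne
    obtain ⟨y, hy, rfl⟩ := Finset.mem_image.mp hu'
    obtain ⟨z, hz, rfl⟩ := Finset.mem_image.mp hv'
    have h := hφ y z
    have h2 := hsep y hy z hz (fun e => hne (by rw [e]))
    rw [hS y hy, hS z hz] at h
    nlinarith

end Link

/-- Twelve unit vectors at mutual angles at least `60°`, with `24` pairs at `60°` and `24` pairs
at `120°` (so `48` ordered pairs of each kind). -/
structure Kiss (C : Finset E3) : Prop where
  card : C.card = 12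
  unit : ∀ x ∈ C, ‖x‖ = 1
  sep : ∀ x ∈ C, ∀ y ∈ C, x ≠ y → inner ℝ x y ≤ (1 / 2 : ℝ)
  pos : prs (1 / 2) C C = 48
  neg : prs (-(1 / 2)) C C = 48

/-- The two counting inequalities at a vertex `x`. The vectors at `60°` and `120°` to `x` are
encoded by separated sets `U` and `V` on the circle; `r` is the set of other vectors. -/
lemma Kiss.vertex {C : Finset E3} (hC : Kiss C) {x : E3} (hx : x ∈ C) :
    ∃ φ : E3 → ℂ, ∃ U V : Finset ℂ, ∃ r ⊆ C,
      (∀ y z : E3, inner ℝ y z = inner ℝ x y * inner ℝ x z + 3 / 4 * (φ y * conj (φ z)).re) ∧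
      U = (nb (1 / 2) C x).image φ ∧ V = (nb (-(1 / 2)) C x).image φ ∧ ArcSep U ∧ ArcSep V ∧
      U.card = (nb (1 / 2) C x).card ∧ V.card = (nb (-(1 / 2)) C x).card ∧
      r.card + U.card + V.card = 11 ∧
      24 ≤ U.card + hit om U U + hit om V V + hit 1 V U + ∑ y ∈ r, (nb (1 / 2) C y).card ∧
      48 ≤ 2 * V.card + hit (-1) U U + hit (-1) V V + 2 * (hit (-om) V U + hit (-conj om) V U)
        + 2 * ∑ y ∈ r, (nb (-(1 / 2)) C y).card := by
  obtain ⟨φ, hφ⟩ := exists_link x (hC.unit x hx)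
  set P := nb (1 / 2) C x with hP
  set Q := nb (-(1 / 2)) C x with hQ
  have hPC : P ⊆ C := Finset.filter_subset _ _
  have hQC : Q ⊆ C := Finset.filter_subset _ _
  have hPi : ∀ y ∈ P, inner ℝ x y = (1 / 2 : ℝ) := fun y hy => (Finset.mem_filter.mp hy).2
  have hQi : ∀ y ∈ Q, inner ℝ x y = (-(1 / 2) : ℝ) := fun y hy => (Finset.mem_filter.mp hy).2
  have hxx : inner ℝ x x = (1 : ℝ) := by
    rw [real_inner_self_eq_norm_sq, hC.unit x hx]; norm_num
  have hUs : ArcSep (P.image φ) := link_sep hφ (by norm_num) hPi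
    (fun y hy => hC.unit y (hPC hy)) (fun y hy z hz => hC.sep y (hPC hy) z (hPC hz))
  have hVs : ArcSep (Q.image φ) := link_sep hφ (by norm_num) hQi
    (fun y hy => hC.unit y (hQC hy)) (fun y hy z hz => hC.sep y (hQC hy) z (hQC hz))
  have hUc : (P.image φ).card = P.card := Finset.card_image_of_injOn (link_injOn hφ hPi)
  have hVc : (Q.image φ).card = Q.card := Finset.card_image_of_injOn (link_injOn hφ hQi)
  have dPQ : Disjoint P Q := by
    rw [Finset.disjoint_left]; intro y h1 h2
    have := hPi y h1; rw [hQi y h2] at this; norm_num at this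
  have dx : Disjoint {x} (P ∪ Q) := by
    rw [Finset.disjoint_singleton_left, Finset.mem_union]
    rintro (h | h)
    · have := hPi x h; rw [hxx] at this; norm_num at this
    · have := hQi x h; rw [hxx] at this; norm_num at this
  have hDC : {x} ∪ (P ∪ Q) ⊆ C :=
    Finset.union_subset (Finset.singleton_subset_iff.mpr hx) (Finset.union_subset hPC hQC)
  have hDcard : ({x} ∪ (P ∪ Q)).card = 1 + (P.card + Q.card) := by
    rw [Finset.card_union_of_disjoint dx, Finset.card_union_of_disjoint dPQ,
      Finset.card_singleton]
  have hexp : ∀ c, prs c ({x} ∪ (P ∪ Q)) ({x} ∪ (P ∪ Q)) = prs c {x} {x} + 2 * prs c {x} P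
      + 2 * prs c {x} Q + prs c P P + 2 * prs c P Q + prs c Q Q := by
    intro c
    rw [prs_union_left c _ dx, prs_union_left c _ dPQ, prs_union_right c _ dx,
      prs_union_right c _ dPQ, prs_union_right c _ dx, prs_union_right c _ dPQ,
      prs_union_right c _ dx, prs_union_right c _ dPQ, prs_comm c P {x}, prs_comm c Q {x},
      prs_comm c Q P]
    ring
  have hconst : ∀ (c d : ℝ) (S : Finset E3), (∀ y ∈ S, inner ℝ x y = d) →
      prs c {x} S = if d = c then S.card else 0 := by
    intro c d S hS
    unfold prs
    rw [Finset.sum_singleton, Finset.sum_congr rfl (fun y hy => by rw [hS y hy])]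
    split_ifs <;> simp
  have hxs : ∀ y ∈ ({x} : Finset E3), inner ℝ x y = (1 : ℝ) := by
    intro y hy; rw [Finset.mem_singleton.mp hy, hxx]
  have hA := prs_le (1 / 2) hDC
  have hB := prs_le (-(1 / 2)) hDC
  rw [hC.pos, hexp, hconst _ _ _ hxs, hconst _ _ _ hPi, hconst _ _ _ hQi,
    prs_eq_cnt hφ (d := 1 / 3) hPi hPi (by norm_num),
    prs_eq_cnt hφ (d := 1) hPi hQi (by norm_num),
    prs_eq_cnt hφ (d := 1 / 3) hQi hQi (by norm_num), cnt_third hUs, cnt_third hVs,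
    cnt_one hUs hVs, if_neg (by norm_num), if_pos rfl, if_neg (by norm_num)] at hA
  rw [hC.neg, hexp, hconst _ _ _ hxs, hconst _ _ _ hPi, hconst _ _ _ hQi,
    prs_eq_cnt hφ (d := -1) hPi hPi (by norm_num),
    prs_eq_cnt hφ (d := -(1 / 3)) hPi hQi (by norm_num),
    prs_eq_cnt hφ (d := -1) hQi hQi (by norm_num), cnt_neg_one hUs hUs, cnt_neg_one hVs hVs,
    cnt_neg_third hUs hVs, if_neg (by norm_num), if_neg (by norm_num), if_pos rfl] at hB
  refine ⟨φ, P.image φ, Q.image φ, C \ ({x} ∪ (P ∪ Q)), Finset.sdiff_subset, hφ, rfl, rfl, hUs,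
    hVs, hUc, hVc, ?_, by omega, by omega⟩
  have := Finset.card_sdiff_add_card_eq_card hDC
  have := hC.card
  omega

lemma no_antipodal_of_five {U : Finset ℂ} (hU : ArcSep U) (h : U.card = 5) :
    ∀ u ∈ U, -u ∉ U := by
  intro u hu hu'
  have := hU.card_le_of_antipodal hu hu'
  omega

lemma hit_neg_one_eq_zero {U : Finset ℂ} (h : ∀ u ∈ U, -u ∉ U) : hit (-1) U U = 0 := by
  rw [hit_card, Finset.card_eq_zero, Finset.filter_eq_empty_iff]
  intro w hw; rw [neg_one_mul]; exact h w hw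

lemma Kiss.nb_le {C : Finset E3} (hC : Kiss C) {x : E3} (hx : x ∈ C) :
    (nb (1 / 2) C x).card ≤ 5 ∧ (nb (-(1 / 2)) C x).card ≤ 5 := by
  obtain ⟨φ, U, V, r, hr, hφ, hUe, hVe, hU, hV, cU, cV, -⟩ := hC.vertex hx
  rw [← cU, ← cV]
  exact ⟨hU.card_le, hV.card_le⟩

lemma neg_om_inv : -om * -conj om = 1 := by rw [neg_mul_neg, om_mul_conj]

/-- At most eight vectors make an angle of `60°` or `120°` with a given one: otherwise there
are too few pairs at `120°`. -/
lemma Kiss.nb_add_le {C : Finset E3} (hC : Kiss C) {x : E3} (hx : x ∈ C) :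
    (nb (1 / 2) C x).card + (nb (-(1 / 2)) C x).card ≤ 8 := by
  obtain ⟨φ, U, V, r, hr, hφ, hUe, hVe, hU, hV, cU, cV, hcard, hA, hB⟩ := hC.vertex hx
  have hqR : ∑ y ∈ r, (nb (-(1 / 2)) C y).card ≤ r.card * 5 := by
    rw [← smul_eq_mul]
    exact Finset.sum_le_card_nsmul _ _ _ (fun y hy => (hC.nb_le (hr hy)).2)
  have h5 := hU.card_le
  have h5' := hV.card_le
  rw [← cU, ← cV]
  by_contra hc
  by_cases h : U.card = 5
  · have ha := no_antipodal_of_five hU h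
    have h0 := hit_neg_one_eq_zero ha
    have h1 := hit_antipodal (-om) V ha
    have h2 := hit_antipodal (-conj om) V ha
    omega
  · have ha := no_antipodal_of_five hV (by omega)
    have h0 := hit_neg_one_eq_zero ha
    have h1 := hit_antipodal (-om) U ha
    have h2 := hit_antipodal (-conj om) U ha
    rw [hit_swap neg_om_inv] at h1
    rw [hit_swap (b := -om) (by rw [mul_comm]; exact neg_om_inv)] at h2
    omega

/-- The bound `8` is also the average, by the two global counts. -/
lemma Kiss.nb_add_eq {C : Finset E3} (hC : Kiss C) {x : E3} (hx : x ∈ C) :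
    (nb (1 / 2) C x).card + (nb (-(1 / 2)) C x).card = 8 := by
  have h := (Finset.sum_eq_sum_iff_of_le (s := C)
    (f := fun x => (nb (1 / 2) C x).card + (nb (-(1 / 2)) C x).card) (g := fun _ => 8)
    (fun x hx => hC.nb_add_le hx)).mp (by
      rw [Finset.sum_add_distrib, ← prs_eq_sum_nb, ← prs_eq_sum_nb, hC.pos, hC.neg,
        Finset.sum_const, hC.card]; norm_num)
  exact h x hx

/-- A vector with five others at `60°` forces the three vectors unrelated to it to have five
others at `120°`, and then there are too few pairs at `60°`. -/
lemma Kiss.nb_pos_le {C : Finset E3} (hC : Kiss C) {x : E3} (hx : x ∈ C) :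
    (nb (1 / 2) C x).card ≤ 4 := by
  obtain ⟨φ, U, V, r, hr, hφ, hUe, hVe, hU, hV, cU, cV, hcard, hA, hB⟩ := hC.vertex hx
  have h8 := hC.nb_add_eq hx
  have hR : ∑ y ∈ r, (nb (1 / 2) C y).card + ∑ y ∈ r, (nb (-(1 / 2)) C y).card
      = r.card * 8 := by
    rw [← Finset.sum_add_distrib, Finset.sum_congr rfl (fun y hy => hC.nb_add_eq (hr hy)),
      Finset.sum_const, smul_eq_mul]
  have h5 := hU.card_le
  rw [← cU, ← cV] at h8
  rw [← cU]
  by_contra hc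
  have ha := no_antipodal_of_five hU (by omega)
  have h0 := hit_neg_one_eq_zero ha
  have h1 := hit_antipodal (-om) V ha
  have h2 := hit_antipodal (-conj om) V ha
  have h3 := hU.hit_om_lt (Finset.card_pos.mp (by omega))
  have h4 := hV.hit_om_lt (Finset.card_pos.mp (by omega))
  have h6 := hit_le 1 V U
  omega

lemma Kiss.nb_pos_eq {C : Finset E3} (hC : Kiss C) {x : E3} (hx : x ∈ C) :
    (nb (1 / 2) C x).card = 4 := by
  have h := (Finset.sum_eq_sum_iff_of_le (s := C)
    (f := fun x => (nb (1 / 2) C x).card) (g := fun _ => 4)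
    (fun x hx => hC.nb_pos_le hx)).mp (by
      rw [← prs_eq_sum_nb, hC.pos, Finset.sum_const, hC.card]; norm_num)
  exact h x hx

/-- The local structure of the cuboctahedron: `C` is closed under differences of vectors at
`60°`, and each vector lies in a triple with mutual angles `60°`. -/
lemma Kiss.local_structure {C : Finset E3} (hC : Kiss C) {x : E3} (hx : x ∈ C) :
    (∀ y ∈ C, inner ℝ x y = (1 / 2 : ℝ) → x - y ∈ C ∧ y - x ∈ C) ∧
    ∃ y ∈ C, ∃ z ∈ C, inner ℝ x y = (1 / 2 : ℝ) ∧ inner ℝ x z = (1 / 2 : ℝ) ∧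
      inner ℝ y z = (1 / 2 : ℝ) := by
  obtain ⟨φ, U, V, r, hr, hφ, hUe, hVe, hU, hV, cU, cV, hcard, hA, hB⟩ := hC.vertex hx
  have h8 := hC.nb_add_eq hx
  have h4 := hC.nb_pos_eq hx
  have hR : ∑ y ∈ r, (nb (1 / 2) C y).card = r.card * 4 := by
    rw [Finset.sum_congr rfl (fun y hy => hC.nb_pos_eq (hr hy)),
      Finset.sum_const, smul_eq_mul]
  have hR' : ∑ y ∈ r, (nb (-(1 / 2)) C y).card = r.card * 4 := by
    have : ∀ y ∈ r, (nb (-(1 / 2)) C y).card = 4 := fun y hy => by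
      have := hC.nb_add_eq (hr hy)
      have := hC.nb_pos_eq (hr hy)
      omega
    rw [Finset.sum_congr rfl this, Finset.sum_const, smul_eq_mul]
  obtain ⟨hUV, hsymm, w, hw, hw'⟩ := four_four hU hV (by omega) (by omega) (by omega) (by omega)
  have hself : ∀ y ∈ C, inner ℝ y y = (1 : ℝ) := fun y hy => by
    rw [real_inner_self_eq_norm_sq, hC.unit y hy]; norm_num
  constructor
  · intro y hy hxy
    have hyU : φ y ∈ U := by
      rw [hUe]; exact Finset.mem_image_of_mem _ (Finset.mem_filter.mpr ⟨hy, hxy⟩)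
    have hyy := mul_conj_eq (hU.1 _ hyU)
    constructor
    · have h := hsymm _ hyU
      rw [hUe, Finset.mem_image] at h
      obtain ⟨v, hv, hvy⟩ := h
      obtain ⟨hvC, hxv⟩ := Finset.mem_filter.mp hv
      have hyv : inner ℝ v y = (-(1 / 2) : ℝ) := by
        rw [hφ v y, hxv, hxy, hvy, neg_mul, hyy]; norm_num
      have : x - y = v := by
        apply eq_of_inner
        rw [inner_sub_left, inner_sub_left, inner_sub_right, inner_sub_right, hself x hx,
          hself y hy, hself v hvC, hxy, hxv, real_inner_comm x y, hxy, real_inner_comm v y, hyv]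
        norm_num
      rw [this]; exact hvC
    · have h := hUV ▸ hyU
      rw [hVe, Finset.mem_image] at h
      obtain ⟨v, hv, hvy⟩ := h
      obtain ⟨hvC, hxv⟩ := Finset.mem_filter.mp hv
      have hyv : inner ℝ v y = (1 / 2 : ℝ) := by
        rw [hφ v y, hxv, hxy, hvy, hyy]; norm_num
      have : y - x = v := by
        apply eq_of_inner
        rw [inner_sub_left, inner_sub_left, inner_sub_right, inner_sub_right, hself x hx,
          hself y hy, hself v hvC, hxy, hxv, real_inner_comm x y, hxy, real_inner_comm v y, hyv]
        norm_num
      rw [this]; exact hvC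
  · have hww := mul_conj_eq (hU.1 _ hw)
    rw [hUe, Finset.mem_image] at hw hw'
    obtain ⟨y, hy, rfl⟩ := hw
    obtain ⟨z, hz, hzy⟩ := hw'
    obtain ⟨hyC, hxy⟩ := Finset.mem_filter.mp hy
    obtain ⟨hzC, hxz⟩ := Finset.mem_filter.mp hz
    refine ⟨y, hyC, z, hzC, hxy, hxz, ?_⟩
    rw [real_inner_comm, hφ z y, hxy, hxz, hzy, mul_assoc, hww, mul_one, om_re]; norm_num

lemma inner_self_of_norm {x : E3} (h : ‖x‖ = 1) : inner ℝ x x = (1 : ℝ) := by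
  rw [real_inner_self_eq_norm_sq, h]; norm_num

/-- For `y` at `60°` to `x`, the vector `y - x` is at `60°` to `y`, and `-x = (y - x) - y`. -/
lemma Kiss.neg_mem {C : Finset E3} (hC : Kiss C) {x : E3} (hx : x ∈ C) : -x ∈ C := by
  obtain ⟨y, hy, -, -, hxy, -⟩ := (hC.local_structure hx).2
  have h1 := ((hC.local_structure hx).1 y hy hxy).2
  have hyy := inner_self_of_norm (hC.unit y hy)
  have h2 := ((hC.local_structure hy).1 (y - x) h1 (by
    rw [inner_sub_right, hyy, real_inner_comm, hxy]; norm_num)).2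
  simpa using h2

/-! ### From the neighbours to the lattice -/

lemma norm_sub_eq_one_iff {a b : E3} (ha : ‖a‖ = 1) (hb : ‖b‖ = 1) :
    ‖a - b‖ = 1 ↔ inner ℝ a b = (1 / 2 : ℝ) := by
  have h := norm_sub_sq_real a b
  rw [ha, hb] at h
  constructor
  · intro h1; rw [h1] at h; linarith
  · intro h1
    rw [h1] at h
    have : ‖a - b‖ ^ 2 = 1 ^ 2 := by rw [h]; norm_num
    exact (pow_left_inj₀ (norm_nonneg _) zero_le_one two_ne_zero).mp this

lemma norm_sub_eq_sqrt_three_iff {a b : E3} (ha : ‖a‖ = 1) (hb : ‖b‖ = 1) :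
    ‖a - b‖ = √3 ↔ inner ℝ a b = (-(1 / 2) : ℝ) := by
  have h := norm_sub_sq_real a b
  have h3 : √3 ^ 2 = 3 := Real.sq_sqrt (by norm_num)
  rw [ha, hb] at h
  constructor
  · intro h1; rw [h1, h3] at h; linarith
  · intro h1
    rw [h1] at h
    have : ‖a - b‖ ^ 2 = √3 ^ 2 := by rw [h, h3]; norm_num
    exact (pow_left_inj₀ (norm_nonneg _) (Real.sqrt_nonneg _) two_ne_zero).mp this

lemma prs_eq_ncard {L' : Set E3} {z : E3} {C : Finset E3} {c d : ℝ}
    (hC : ∀ a, a ∈ C ↔ z + a ∈ L' ∧ ‖a‖ = 1)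
    (hcd : ∀ a b : E3, ‖a‖ = 1 → ‖b‖ = 1 → (‖a - b‖ = d ↔ inner ℝ a b = c)) :
    prs c C C = ({p : E3 × E3 | p.1 ∈ L' ∧ p.2 ∈ L' ∧ ‖p.1 - p.2‖ = d ∧
        ‖z - p.1‖ = 1 ∧ ‖z - p.2‖ = 1}).ncard := by
  have hset : {p : E3 × E3 | p.1 ∈ L' ∧ p.2 ∈ L' ∧ ‖p.1 - p.2‖ = d ∧
        ‖z - p.1‖ = 1 ∧ ‖z - p.2‖ = 1} = (fun p : E3 × E3 => (z + p.1, z + p.2)) ''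
        (((C ×ˢ C).filter (fun p => inner ℝ p.1 p.2 = c) : Finset (E3 × E3)) : Set (E3 × E3)) := by
    ext ⟨p, q⟩
    simp only [Set.mem_ofPred_eq, Set.mem_image, Finset.mem_coe, Finset.mem_filter,
      Finset.mem_product, hC, Prod.mk.injEq, Prod.exists]
    constructor
    · rintro ⟨hp, hq, h, h1, h2⟩
      rw [norm_sub_rev] at h1 h2
      refine ⟨p - z, q - z, ⟨⟨⟨by simpa using hp, h1⟩, ⟨by simpa using hq, h2⟩⟩, ?_⟩, by simp,
        by simp⟩
      rw [← hcd _ _ h1 h2]; simpa using h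
    · rintro ⟨a, b, ⟨⟨⟨ha, ha1⟩, ⟨hb, hb1⟩⟩, h⟩, rfl, rfl⟩
      refine ⟨ha, hb, ?_, by simpa using ha1, by simpa using hb1⟩
      rw [add_sub_add_left_eq_sub]
      exact (hcd a b ha1 hb1).mpr h
  rw [hset, Set.ncard_image_of_injective _ (by
    rintro ⟨a, b⟩ ⟨a', b'⟩ h
    simpa using h), Set.ncard_coe_finset, Finset.card_filter, Finset.sum_product]
  rfl

/-- The hypotheses on `L'` at a point `z` say that the differences to the neighbours form a `Kiss`
configuration. -/
lemma exists_kiss {L' : Set E3}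
    (h1 : ∀ z ∈ L', ∀ z' ∈ L', z' ≠ z → 1 ≤ ‖z - z'‖)
    (h2 : ∀ z ∈ L', ({z' | z' ∈ L' ∧ ‖z - z'‖ = 1}).ncard = 12)
    (h3 : ∀ z ∈ L', ({p : E3 × E3 | p.1 ∈ L' ∧ p.2 ∈ L' ∧ ‖p.1 - p.2‖ = 1 ∧
        ‖z - p.1‖ = 1 ∧ ‖z - p.2‖ = 1}).ncard = 48)
    (h4 : ∀ z ∈ L', ({p : E3 × E3 | p.1 ∈ L' ∧ p.2 ∈ L' ∧ ‖p.1 - p.2‖ = Real.sqrt 3 ∧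
        ‖z - p.1‖ = 1 ∧ ‖z - p.2‖ = 1}).ncard = 48) {z : E3} (hz : z ∈ L') :
    ∃ C : Finset E3, Kiss C ∧ ∀ a, a ∈ C ↔ z + a ∈ L' ∧ ‖a‖ = 1 := by
  have hfin : ({z' | z' ∈ L' ∧ ‖z - z'‖ = 1}).Finite :=
    Set.finite_of_ncard_ne_zero (by rw [h2 z hz]; norm_num)
  set C : Finset E3 := hfin.toFinset.image (fun w => w - z) with hCdef
  have hmem : ∀ a, a ∈ C ↔ z + a ∈ L' ∧ ‖a‖ = 1 := by
    intro a
    simp only [hCdef, Finset.mem_image, Set.Finite.mem_toFinset, Set.mem_ofPred_eq]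
    constructor
    · rintro ⟨w, ⟨hw, hn⟩, rfl⟩
      exact ⟨by simpa using hw, by rw [norm_sub_rev]; exact hn⟩
    · rintro ⟨h, hn⟩
      exact ⟨z + a, ⟨h, by simpa using hn⟩, by simp⟩
  refine ⟨C, ⟨?_, fun x hx => ((hmem x).mp hx).2, ?_, ?_, ?_⟩, hmem⟩
  · rw [hCdef, Finset.card_image_of_injective _ (sub_left_injective),
      ← Set.ncard_eq_toFinset_card _ hfin, h2 z hz]
  · intro x hx y hy hne
    obtain ⟨hx, hx1⟩ := (hmem x).mp hx
    obtain ⟨hy, hy1⟩ := (hmem y).mp hy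
    have h := h1 _ hx _ hy (fun h => hne (add_left_cancel h).symm)
    rw [add_sub_add_left_eq_sub] at h
    have h' := norm_sub_sq_real x y
    rw [hx1, hy1] at h'
    nlinarith
  · rw [prs_eq_ncard hmem (fun a b ha hb => norm_sub_eq_one_iff ha hb), h3 z hz]
  · rw [prs_eq_ncard hmem (fun a b ha hb => norm_sub_eq_sqrt_three_iff ha hb), h4 z hz]

/-- Three unit vectors at mutual angles `60°`, the shape of the basis `fccB`. -/
structure Frame (a b c : E3) : Prop where
  na : ‖a‖ = 1
  nb : ‖b‖ = 1
  nc : ‖c‖ = 1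
  ab : inner ℝ a b = (1 / 2 : ℝ)
  ac : inner ℝ a c = (1 / 2 : ℝ)
  bc : inner ℝ b c = (1 / 2 : ℝ)

/-- The point `z` and its six translates by `±a`, `±b`, `±c` belong to `L'`. -/
def FrameStar (L' : Set E3) (a b c z : E3) : Prop :=
  z ∈ L' ∧ (z + a ∈ L' ∧ z + b ∈ L' ∧ z + c ∈ L') ∧ z + -a ∈ L' ∧ z + -b ∈ L' ∧ z + -c ∈ L'

lemma Frame.rot {a b c : E3} (h : Frame a b c) : Frame b c a :=
  ⟨h.nb, h.nc, h.na, h.bc, by rw [real_inner_comm]; exact h.ab, by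
    rw [real_inner_comm]; exact h.ac⟩

lemma Frame.neg {a b c : E3} (h : Frame a b c) : Frame (-a) (-b) (-c) :=
  ⟨by rw [norm_neg, h.na], by rw [norm_neg, h.nb], by rw [norm_neg, h.nc],
    by rw [inner_neg_neg, h.ab], by rw [inner_neg_neg, h.ac], by rw [inner_neg_neg, h.bc]⟩

lemma FrameStar.rot {L' : Set E3} {a b c z : E3} (h : FrameStar L' a b c z) : FrameStar L' b c a z := by
  unfold FrameStar at *; tauto

lemma FrameStar.neg {L' : Set E3} {a b c z : E3} (h : FrameStar L' a b c z) :
    FrameStar L' (-a) (-b) (-c) z := by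
  unfold FrameStar at *; simp only [neg_neg]; tauto

/-- The frame at a point is inherited by its neighbour `z + a`: the differences there include `-a`,
`b - a` and `c - a`, and closure under differences at `60°` yields `±a`, `±b`, `±c`. -/
lemma FrameStar.step {L' : Set E3}
    (hK : ∀ z ∈ L', ∃ C : Finset E3, Kiss C ∧ ∀ a, a ∈ C ↔ z + a ∈ L' ∧ ‖a‖ = 1)
    {a b c z : E3} (hf : Frame a b c) (h : FrameStar L' a b c z) : FrameStar L' a b c (z + a) := by
  obtain ⟨hz, ⟨ha, hb, hc⟩, -⟩ := h
  obtain ⟨C, hC, hmem⟩ := hK _ ha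
  have haC : -a ∈ C := (hmem _).mpr ⟨by simpa using hz, by rw [norm_neg, hf.na]⟩
  have haa := inner_self_of_norm hf.na
  have diff : ∀ y, z + y ∈ L' → ‖y‖ = 1 → inner ℝ a y = (1 / 2 : ℝ) → -y ∈ C ∧ y ∈ C := by
    intro y hy hy1 hay
    have h1 : y - a ∈ C := (hmem _).mpr ⟨by
      rw [show z + a + (y - a) = z + y by abel]; exact hy, by
      rw [norm_sub_rev]; exact (norm_sub_eq_one_iff hf.na hy1).mpr hay⟩
    have h2 := (hC.local_structure haC).1 _ h1 (by
      rw [inner_neg_left, inner_sub_right, hay, haa]; norm_num)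
    constructor
    · convert h2.1 using 1; abel
    · convert h2.2 using 1; abel
  have hbC := diff b hb hf.nb hf.ab
  have hcC := diff c hc hf.nc hf.ac
  have haC' : a ∈ C := by simpa using hC.neg_mem haC
  exact ⟨ha, ⟨((hmem _).mp haC').1, ((hmem _).mp hbC.2).1, ((hmem _).mp hcC.2).1⟩,
    ((hmem _).mp haC).1, ((hmem _).mp hbC.1).1, ((hmem _).mp hcC.1).1⟩

lemma FrameStar.zsmul {L' : Set E3}
    (hK : ∀ z ∈ L', ∃ C : Finset E3, Kiss C ∧ ∀ a, a ∈ C ↔ z + a ∈ L' ∧ ‖a‖ = 1)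
    {a b c z : E3} (hf : Frame a b c) (h : FrameStar L' a b c z) (n : ℤ) :
    FrameStar L' a b c (z + n • a) := by
  induction n with
  | zero => simpa using h
  | succ n ih =>
    have := ih.step hK hf
    convert this using 1
    rw [add_smul, one_smul, add_assoc]
  | pred n ih =>
    have := (ih.neg.step hK hf.neg).neg
    simp only [neg_neg] at this
    convert this using 1
    rw [sub_smul, one_smul, add_assoc, sub_eq_add_neg]

lemma FrameStar.lattice {L' : Set E3}
    (hK : ∀ z ∈ L', ∃ C : Finset E3, Kiss C ∧ ∀ a, a ∈ C ↔ z + a ∈ L' ∧ ‖a‖ = 1)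
    {a b c z : E3} (hf : Frame a b c) (h : FrameStar L' a b c z) (i j k : ℤ) :
    z + i • a + j • b + k • c ∈ L' :=
  ((((h.zsmul hK hf i).rot).zsmul hK hf.rot j).rot.zsmul hK hf.rot.rot k).1

lemma exists_star {L' : Set E3}
    (hK : ∀ z ∈ L', ∃ C : Finset E3, Kiss C ∧ ∀ a, a ∈ C ↔ z + a ∈ L' ∧ ‖a‖ = 1)
    {z : E3} (hz : z ∈ L') : ∃ a b c, Frame a b c ∧ FrameStar L' a b c z := by
  obtain ⟨C, hC, hmem⟩ := hK z hz
  obtain ⟨x, hx⟩ : C.Nonempty := by rw [← Finset.card_pos, hC.card]; norm_num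
  obtain ⟨y, hy, w, hw, hxy, hxw, hyw⟩ := (hC.local_structure hx).2
  have m : ∀ a ∈ C, z + a ∈ L' := fun a ha => ((hmem a).mp ha).1
  exact ⟨x, y, w, ⟨hC.unit x hx, hC.unit y hy, hC.unit w hw, hxy, hxw, hyw⟩, hz,
    ⟨m _ hx, m _ hy, m _ hw⟩, m _ (hC.neg_mem hx), m _ (hC.neg_mem hy), m _ (hC.neg_mem hw)⟩

lemma inv_sqrt_two_sq : (√2)⁻¹ * (√2)⁻¹ = (1 / 2 : ℝ) := by
  rw [← mul_inv, Real.mul_self_sqrt (by norm_num)]; norm_num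

/-- The vectors `(b + c - a) / √2`, `(c + a - b) / √2`, `(a + b - c) / √2` attached to a frame are
orthonormal; their coordinate map sends the frame to `fccB`. -/
lemma Frame.exists_isometry {a b c : E3} (hf : Frame a b c) :
    ∃ R : E3 ≃ₗᵢ[ℝ] E3, R a = fccB 0 ∧ R b = fccB 1 ∧ R c = fccB 2 := by
  have haa := inner_self_of_norm hf.na
  have hbb := inner_self_of_norm hf.nb
  have hcc := inner_self_of_norm hf.nc
  have hba : inner ℝ b a = (1 / 2 : ℝ) := by rw [real_inner_comm]; exact hf.ab
  have hca : inner ℝ c a = (1 / 2 : ℝ) := by rw [real_inner_comm]; exact hf.ac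
  have hcb : inner ℝ c b = (1 / 2 : ℝ) := by rw [real_inner_comm]; exact hf.bc
  have h2 := inv_sqrt_two_sq
  set s : ℝ := (√2)⁻¹ with hs
  have horth : Orthonormal ℝ
      (![s • (b + c - a), s • (c + a - b), s • (a + b - c)] : Fin 3 → E3) := by
    rw [orthonormal_iff_ite]
    intro i j
    fin_cases i <;> fin_cases j <;>
      simp [inner_smul_left, inner_smul_right, inner_add_left, inner_add_right, inner_sub_left,
        inner_sub_right, haa, hbb, hcc, hba, hca, hcb, hf.ab, hf.ac, hf.bc,
        -inner_self_eq_norm_sq_to_K] <;>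
      first | linarith | exact Or.inr (by norm_num)
  obtain ⟨B, hB⟩ := Orthonormal.exists_orthonormalBasis_extension_of_card_eq
    (𝕜 := ℝ) (E := E3) (ι := Fin 3) (by simp) (s := Set.univ)
    (v := ![s • (b + c - a), s • (c + a - b), s • (a + b - c)])
    (horth.comp _ Subtype.val_injective)
  have e0 : B 0 = s • (b + c - a) := hB 0 trivial
  have e1 : B 1 = s • (c + a - b) := hB 1 trivial
  have e2 : B 2 = s • (a + b - c) := hB 2 trivial
  have hA : a = s • (B 1 + B 2) := by
    rw [e1, e2, ← smul_add, smul_smul, h2, show c + a - b + (a + b - c) = (2 : ℝ) • a by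
      rw [two_smul]; abel, smul_smul]; norm_num
  have hB' : b = s • (B 0 + B 2) := by
    rw [e0, e2, ← smul_add, smul_smul, h2, show b + c - a + (a + b - c) = (2 : ℝ) • b by
      rw [two_smul]; abel, smul_smul]; norm_num
  have hC : c = s • (B 0 + B 1) := by
    rw [e0, e1, ← smul_add, smul_smul, h2, show b + c - a + (c + a - b) = (2 : ℝ) • c by
      rw [two_smul]; abel, smul_smul]; norm_num
  refine ⟨B.repr, ?_, ?_, ?_⟩
  · rw [hA, map_smul, map_add, B.repr_self, B.repr_self]
    ext i; fin_cases i <;> simp [fccB, toE3, hs]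
  · rw [hB', map_smul, map_add, B.repr_self, B.repr_self]
    ext i; fin_cases i <;> simp [fccB, toE3, hs]
  · rw [hC, map_smul, map_add, B.repr_self, B.repr_self]
    ext i; fin_cases i <;> simp [fccB, toE3, hs]

lemma sum_fccB (n : Fin 3 → ℤ) : ∑ i, (n i : ℝ) • fccB i =
    (√2)⁻¹ • toE3 ![(n 1 + n 2 : ℝ), (n 0 + n 2 : ℝ), (n 0 + n 1 : ℝ)] := by
  rw [Fin.sum_univ_three]
  ext i; fin_cases i <;> simp [fccB, toE3] <;> ring

/-- Every point of space is at distance less than `1` from the lattice: round the scaled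
coordinates, and correct the parity of their sum on the first one. -/
lemma exists_near (v : E3) : ∃ n : Fin 3 → ℤ, ‖v - ∑ i, (n i : ℝ) • fccB i‖ < 1 := by
  have hr : ∀ x : ℝ, |x - round x| ≤ 1 / 2 := fun x => abs_sub_round x
  -- an integer of prescribed parity within distance one
  have hp : ∀ (x : ℝ) (m : ℤ), ∃ k l : ℤ, k + m = 2 * l ∧ |x - k| ≤ 1 := by
    intro x m
    rcases Int.even_or_odd' (round x + m) with ⟨l, hl | hl⟩
    · exact ⟨round x, l, hl, (hr x).trans (by norm_num)⟩
    · have := abs_le.mp (hr x)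
      rcases le_total (round x : ℝ) x with h | h
      · exact ⟨round x + 1, l + 1, by omega, by push_cast; rw [abs_le]; constructor <;> linarith⟩
      · exact ⟨round x - 1, l, by omega, by push_cast; rw [abs_le]; constructor <;> linarith⟩
  obtain ⟨k, l, hkl, hk⟩ := hp (√2 * v 0) (round (√2 * v 1) + round (√2 * v 2))
  have hk1 := hr (√2 * v 1)
  have hk2 := hr (√2 * v 2)
  generalize round (√2 * v 1) = p at *
  generalize round (√2 * v 2) = q at *
  refine ⟨![l - k, l - p, l - q], ?_⟩
  have hs : √2 * √2 = 2 := Real.mul_self_sqrt (by norm_num)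
  have h2 := inv_sqrt_two_sq
  have hs1 : (√2)⁻¹ * √2 = 1 := inv_mul_cancel₀ (by positivity)
  have hkl' : (k : ℝ) + (p + q) = 2 * l := by exact_mod_cast hkl
  have hsq : ‖v - ∑ i, ((![l - k, l - p, l - q] i : ℤ) : ℝ) • fccB i‖ ^ 2 =
      1 / 2 * ((√2 * v 0 - k) ^ 2 + (√2 * v 1 - p) ^ 2 + (√2 * v 2 - q) ^ 2) := by
    rw [sum_fccB, EuclideanSpace.norm_sq_eq, Fin.sum_univ_three]
    simp only [toE3, PiLp.sub_apply, PiLp.smul_apply, Real.norm_eq_abs, sq_abs]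
    simp
    have hk' : (l : ℝ) - p + (l - q) = k := by linarith
    have hp' : (l : ℝ) - k + (l - q) = p := by linarith
    have hq' : (l : ℝ) - k + (l - p) = q := by linarith
    rw [hk', hp', hq']
    have key : ∀ x y : ℝ, (x - (√2)⁻¹ * y) ^ 2 = 1 / 2 * (√2 * x - y) ^ 2 := by
      intro x y
      rw [← h2]
      linear_combination (-(x ^ 2) * ((√2)⁻¹ * √2 + 1) + 2 * (√2)⁻¹ * x * y) * hs1
    rw [key, key, key]; ring
  have b0 : (√2 * v 0 - k) ^ 2 ≤ 1 := by rw [← sq_abs]; nlinarith [abs_nonneg (√2 * v 0 - k)]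
  have b1 : (√2 * v 1 - p) ^ 2 ≤ 1 / 4 := by
    rw [← sq_abs]; nlinarith [abs_nonneg (√2 * v 1 - p)]
  have b2 : (√2 * v 2 - q) ^ 2 ≤ 1 / 4 := by
    rw [← sq_abs]; nlinarith [abs_nonneg (√2 * v 2 - q)]
  rw [← sq_lt_one_iff₀ (norm_nonneg _), hsq]
  linarith

/-- A frame or its negative is carried to `fccB` by a rotation. -/
lemma Frame.exists_rotation {L' : Set E3} {a b c z : E3} (hf : Frame a b c)
    (h : FrameStar L' a b c z) : ∃ a b c : E3, Frame a b c ∧ FrameStar L' a b c z ∧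
      ∃ R : E3 ≃ₗᵢ[ℝ] E3,
      LinearMap.det (R.toLinearEquiv : E3 →ₗ[ℝ] E3) = 1 ∧
      R a = fccB 0 ∧ R b = fccB 1 ∧ R c = fccB 2 := by
  obtain ⟨R, ha, hb, hc⟩ := hf.exists_isometry
  have hdet : |LinearMap.det (R.toLinearEquiv : E3 →ₗ[ℝ] E3)| = 1 := by
    rw [← LinearMap.normDet_eq_abs_det]
    exact R.toLinearIsometry.normDet_eq_one
  rcases (abs_eq zero_le_one).mp hdet with hd | hd
  · exact ⟨a, b, c, hf, h, R, hd, ha, hb, hc⟩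
  · refine ⟨-a, -b, -c, hf.neg, h.neg, R.trans (LinearIsometryEquiv.neg ℝ), ?_, ?_, ?_, ?_⟩
    · have : (((R.trans (LinearIsometryEquiv.neg ℝ)).toLinearEquiv : E3 ≃ₗ[ℝ] E3) : E3 →ₗ[ℝ] E3) =
          (-1 : ℝ) • (R.toLinearEquiv : E3 →ₗ[ℝ] E3) := by
        ext x; simp
      rw [this, LinearMap.det_smul, hd, finrank_euclideanSpace_fin]; norm_num
    · simp [ha]
    · simp [hb]
    · simp [hc]

/-- Characterization of the fcc lattice by local properties: a nonempty set whose every point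
has minimum distance 1 to the others, exactly 12 neighbors at distance 1, exactly 48 ordered
pairs of neighbors at mutual distance 1, and exactly 48 ordered pairs of neighbors at mutual
distance `√3`, is a rotated and translated copy of `L_fcc`. -/
theorem fcc_characterization (L' : Set E3) (hne : L'.Nonempty)
    (h1 : ∀ z ∈ L', ∀ z' ∈ L', z' ≠ z → 1 ≤ ‖z - z'‖)
    (h2 : ∀ z ∈ L', ({z' | z' ∈ L' ∧ ‖z - z'‖ = 1}).ncard = 12)
    (h3 : ∀ z ∈ L', ({p : E3 × E3 | p.1 ∈ L' ∧ p.2 ∈ L' ∧ ‖p.1 - p.2‖ = 1 ∧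
        ‖z - p.1‖ = 1 ∧ ‖z - p.2‖ = 1}).ncard = 48)
    (h4 : ∀ z ∈ L', ({p : E3 × E3 | p.1 ∈ L' ∧ p.2 ∈ L' ∧ ‖p.1 - p.2‖ = Real.sqrt 3 ∧
        ‖z - p.1‖ = 1 ∧ ‖z - p.2‖ = 1}).ncard = 48) :
    ∃ (R : E3 ≃ₗᵢ[ℝ] E3) (t : E3),
      LinearMap.det (R.toLinearEquiv : E3 →ₗ[ℝ] E3) = 1 ∧
      (fun z => R z + t) '' L' = Lfcc := by
  have hK : ∀ z ∈ L', ∃ C : Finset E3, Kiss C ∧ ∀ a, a ∈ C ↔ z + a ∈ L' ∧ ‖a‖ = 1 :=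
    fun z hz => exists_kiss h1 h2 h3 h4 hz
  obtain ⟨z, hz⟩ := hne
  obtain ⟨a₀, b₀, c₀, hf₀, hst₀⟩ := exists_star hK hz
  obtain ⟨a, b, c, hf, hst, R, hdet, ha, hb, hc⟩ := hf₀.exists_rotation hst₀
  have hR : ∀ n : Fin 3 → ℤ, R (z + n 0 • a + n 1 • b + n 2 • c) + -R z =
      ∑ i, (n i : ℝ) • fccB i := by
    intro n
    simp only [map_add, map_zsmul, ha, hb, hc, Fin.sum_univ_three, Int.cast_smul_eq_zsmul]
    abel
  refine ⟨R, -R z, hdet, Set.Subset.antisymm ?_ ?_⟩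
  · rintro _ ⟨w, hw, rfl⟩
    obtain ⟨n, hn⟩ := exists_near (R w + -R z)
    have hmem := hst.lattice hK hf (n 0) (n 1) (n 2)
    refine ⟨n, ?_⟩
    -- a point of `L'` closer than `1` to a lattice point coincides with it
    have heq : w = z + n 0 • a + n 1 • b + n 2 • c := by
      by_contra hne
      have hge := h1 _ hmem _ hw hne
      rw [← hR n, add_sub_add_right_eq_sub, ← map_sub, R.norm_map, norm_sub_rev] at hn
      linarith
    rw [← hR n, ← heq]
  · rintro _ ⟨n, rfl⟩
    exact ⟨_, hst.lattice hK hf (n 0) (n 1) (n 2), hR n⟩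

end
end

section
/- If Z ⊂ ℝ³ is a set with |z| = 1 for every z ∈ Z and |z − z'| ≥ 1 for all distinct z, z' ∈ Z, then #Z ≤ 12. Moreover this bound is attained: the set Q_co = L_fcc ∩ S², where S² is the unit sphere centered at the origin, has exactly 12 elements and satisfies these conditions. -/
/-!
The upper bound is a Delsarte-type linear programming argument, strengthened by a bound for the
points lying in a cap. The polynomial
`testFun = 1 + 1.54 P₁ + 3.495 P₂ + 1.57 P₃ + 1.98 P₄ + 0.285 P₉`
is a combination of Legendre polynomials `Pₖ` with nonnegative coefficients. By the addition theorem
each `Pₖ(⟪x, y⟫)` is a positive semidefinite kernel on the sphere; so for `N` unit vectors the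
double sum of `testFun ⟪x, y⟫` is at least `N ^ 2` (`card_sq_le_sum_testFun`).

In the other direction, fix a point `x`. The other points have `⟪x, y⟫ ≤ 1/2`, and `testFun ≤ 0` on
`[-3/5, 1/2]`, so only the points with height `u = -⟪x, y⟫ > 3/5` contribute positively. To such a
point, with planar projection `p ∈ ℂ` orthogonal to `x`, attach the vector
`w = (h(u)/√7, p, √(2/5) b(u) p²)` of `ℝ × ℂ × ℂ = ℝ⁵` with suitable functions `h` and `b`
(`capH`, `capB`). The angular separation of at least `60°` forces these vectors to have pairwise
nonpositive inner products (`cap_pair`), and then the squared cosines of their angles with the first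
axis sum to at most `1`, as they would for orthogonal vectors (`sum_cos_sq_le_one`). Since
`testFun (-u)` is at most `25/8` times this squared cosine (`testFun_le_cap`), each row sum is at
most `testFun 1 + 25/8 = 12.995`. Hence `N ^ 2 ≤ 12.995 N`, that is `N ≤ 12`.

For the configuration `Qco`, the squared norm of a lattice vector is an integral positive definite
quadratic form in its coordinates. It is at least `1` off the origin, which gives the separation,
and it takes the value `1` at exactly twelve integer points.
-/

open scoped BigOperators
open scoped Classical

noncomputable section

/-- The cuboctahedron: the set of fcc lattice points on the unit sphere. -/
def Qco : Set E3 := Lfcc ∩ {x | ‖x‖ = 1}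

/-! ### Positive semidefinite kernels on the sphere -/

/-- The polynomial `chebR c ρ m` equals `Re (z ^ m)` for a complex number `z` with real part `c`
and squared modulus `ρ` (a homogenised Chebyshev polynomial of the first kind). -/
def chebR (c ρ : ℝ) : ℕ → ℝ
  | 0 => 1
  | 1 => c
  | m + 2 => 2 * c * chebR c ρ (m + 1) - ρ * chebR c ρ m

lemma re_pow_eq_chebR (z : ℂ) (m : ℕ) :
    (z ^ m).re = chebR z.re (z.re ^ 2 + z.im ^ 2) m := by
  induction m using Nat.twoStepInduction with
  | zero => simp [chebR]
  | one => simp [chebR]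
  | more m h0 h1 =>
    rw [chebR, ← h0, ← h1]
    have e1 : (z ^ (m + 1)).re = z.re * (z ^ m).re - z.im * (z ^ m).im := by
      rw [pow_succ, Complex.mul_re]; ring
    have e2 : (z ^ (m + 2)).re = (z.re ^ 2 - z.im ^ 2) * (z ^ m).re
        - 2 * z.re * z.im * (z ^ m).im := by
      rw [pow_add, Complex.mul_re, pow_two, Complex.mul_re, Complex.mul_im]; ring
    rw [e2, e1]; ring

/-- A kernel whose sum over all pairs from any finite set of unit vectors is nonnegative. -/
def SumNonneg (K : E3 → E3 → ℝ) : Prop :=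
  ∀ s : Finset E3, (∀ x ∈ s, ‖x‖ = 1) → 0 ≤ ∑ x ∈ s, ∑ y ∈ s, K x y

lemma SumNonneg.add {K L : E3 → E3 → ℝ} (hK : SumNonneg K) (hL : SumNonneg L) :
    SumNonneg (fun x y => K x y + L x y) := by
  intro s hs
  simp only [Finset.sum_add_distrib]
  exact add_nonneg (hK s hs) (hL s hs)

lemma SumNonneg.smul {K : E3 → E3 → ℝ} (hK : SumNonneg K) {a : ℝ} (ha : 0 ≤ a) :
    SumNonneg (fun x y => a * K x y) := by
  intro s hs
  simp only [← Finset.mul_sum]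
  exact mul_nonneg ha (hK s hs)

lemma SumNonneg.congr {K L : E3 → E3 → ℝ} (hK : SumNonneg K)
    (h : ∀ x y : E3, ‖x‖ = 1 → ‖y‖ = 1 → L x y = K x y) : SumNonneg L := by
  intro s hs
  have : ∑ x ∈ s, ∑ y ∈ s, L x y = ∑ x ∈ s, ∑ y ∈ s, K x y :=
    Finset.sum_congr rfl fun x hx => Finset.sum_congr rfl fun y hy => h x y (hs x hx) (hs y hy)
  rw [this]
  exact hK s hs

/-- The elementary positive kernels: with pole `(0, 0, 1)` and `p x = x₀ + i x₁`, the double sum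
is `|∑ g(x₂) (p x) ^ m| ^ 2`. -/
def zonal (m : ℕ) (g : ℝ → ℝ) (x y : E3) : ℝ :=
  g (x 2) * g (y 2) *
    chebR (x 0 * y 0 + x 1 * y 1) ((1 - x 2 ^ 2) * (1 - y 2 ^ 2)) m

lemma unit_coords {x : E3} (hx : ‖x‖ = 1) : x 0 ^ 2 + x 1 ^ 2 = 1 - x 2 ^ 2 := by
  have h := EuclideanSpace.norm_sq_eq x
  rw [hx, Fin.sum_univ_three] at h
  simp only [Real.norm_eq_abs, sq_abs] at h
  linarith

lemma sumNonneg_zonal (m : ℕ) (g : ℝ → ℝ) : SumNonneg (zonal m g) := by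
  intro s hs
  let q : E3 → ℂ := fun x => (g (x 2) : ℂ) * (⟨x 0, x 1⟩ : ℂ) ^ m
  have hterm : ∀ x ∈ s, ∀ y ∈ s, zonal m g x y = (q x * starRingEnd ℂ (q y)).re := by
    intro x hx y hy
    have e : q x * starRingEnd ℂ (q y) =
        ((g (x 2) * g (y 2) : ℝ) : ℂ) *
          ((⟨x 0, x 1⟩ : ℂ) * starRingEnd ℂ (⟨y 0, y 1⟩ : ℂ)) ^ m := by
      simp only [q, map_mul, map_pow, Complex.conj_ofReal, Complex.ofReal_mul]
      ring
    rw [e, Complex.re_ofReal_mul, re_pow_eq_chebR]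
    simp only [Complex.mul_re, Complex.mul_im, Complex.conj_re, Complex.conj_im]
    unfold zonal
    rw [← unit_coords (hs x hx), ← unit_coords (hs y hy)]
    congr 2 <;> ring
  have hsum : ∑ x ∈ s, ∑ y ∈ s, zonal m g x y = Complex.normSq (∑ x ∈ s, q x) := by
    have h1 : ((∑ x ∈ s, q x) * starRingEnd ℂ (∑ x ∈ s, q x)).re =
        Complex.normSq (∑ x ∈ s, q x) := by
      rw [Complex.mul_conj, Complex.ofReal_re]
    rw [← h1, map_sum, Finset.sum_mul_sum, Complex.re_sum]
    refine Finset.sum_congr rfl fun x hx => ?_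
    rw [Complex.re_sum]
    exact Finset.sum_congr rfl fun y hy => hterm x hx y hy
  rw [hsum]
  exact Complex.normSq_nonneg _

lemma inner_coords (x y : E3) : inner ℝ x y = (x 0 * y 0 + x 1 * y 1) + x 2 * y 2 := by
  rw [PiLp.inner_apply, Fin.sum_univ_three]
  simp only [RCLike.inner_apply, conj_trivial]
  ring

/-- The Legendre polynomial of degree 9. -/
def legendre9 (t : ℝ) : ℝ :=
  (12155 * t ^ 9 - 25740 * t ^ 7 + 18018 * t ^ 5 - 4620 * t ^ 3 + 315 * t) / 128

lemma sumNonneg_legendre1 : SumNonneg (fun x y => inner ℝ x y) := by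
  refine ((sumNonneg_zonal 0 fun u => u).add (sumNonneg_zonal 1 fun _ => 1)).congr ?_
  intro x y _ _
  rw [inner_coords]
  simp only [zonal, chebR]
  ring

lemma sumNonneg_legendre2 : SumNonneg (fun x y => (3 * inner ℝ x y ^ 2 - 1) / 2) := by
  refine (((sumNonneg_zonal 0 fun u => 3 * u ^ 2 - 1).smul (a := 1 / 4) (by norm_num)).add
    (((sumNonneg_zonal 1 fun u => u).smul (a := 3) (by norm_num)).add
    ((sumNonneg_zonal 2 fun _ => 1).smul (a := 3 / 4) (by norm_num)))).congr ?_
  intro x y _ _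
  rw [inner_coords]
  simp only [zonal, chebR]
  ring

lemma sumNonneg_legendre3 :
    SumNonneg (fun x y => (5 * inner ℝ x y ^ 3 - 3 * inner ℝ x y) / 2) := by
  refine (((sumNonneg_zonal 0 fun u => 5 * u ^ 3 - 3 * u).smul (a := 1 / 4) (by norm_num)).add
    (((sumNonneg_zonal 1 fun u => 5 * u ^ 2 - 1).smul (a := 3 / 8) (by norm_num)).add
    (((sumNonneg_zonal 2 fun u => u).smul (a := 15 / 4) (by norm_num)).add
    ((sumNonneg_zonal 3 fun _ => 1).smul (a := 5 / 8) (by norm_num))))).congr ?_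
  intro x y _ _
  rw [inner_coords]
  simp only [zonal, chebR]
  ring

lemma sumNonneg_legendre4 :
    SumNonneg (fun x y => (35 * inner ℝ x y ^ 4 - 30 * inner ℝ x y ^ 2 + 3) / 8) := by
  refine (((sumNonneg_zonal 0 fun u => 35 * u ^ 4 - 30 * u ^ 2 + 3).smul (a := 1 / 64)
      (by norm_num)).add
    (((sumNonneg_zonal 1 fun u => 7 * u ^ 3 - 3 * u).smul (a := 5 / 8) (by norm_num)).add
    (((sumNonneg_zonal 2 fun u => 7 * u ^ 2 - 1).smul (a := 5 / 16) (by norm_num)).add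
    (((sumNonneg_zonal 3 fun u => u).smul (a := 35 / 8) (by norm_num)).add
    ((sumNonneg_zonal 4 fun _ => 1).smul (a := 35 / 64) (by norm_num)))))).congr ?_
  intro x y _ _
  rw [inner_coords]
  simp only [zonal, chebR]
  ring

/-- The addition theorem for the Legendre polynomial of degree 9; the polynomials in `u` are
proportional to its derivatives. -/
lemma sumNonneg_legendre9 : SumNonneg (fun x y => legendre9 (inner ℝ x y)) := by
  refine (((sumNonneg_zonal 0 fun u => 12155 * u ^ 9 - 25740 * u ^ 7 + 18018 * u ^ 5
      - 4620 * u ^ 3 + 315 * u).smul (a := 1 / 16384) (by norm_num)).add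
    (((sumNonneg_zonal 1 fun u => 2431 * u ^ 8 - 4004 * u ^ 6 + 2002 * u ^ 4 - 308 * u ^ 2
      + 7).smul (a := 45 / 16384) (by norm_num)).add
    (((sumNonneg_zonal 2 fun u => 221 * u ^ 7 - 273 * u ^ 5 + 91 * u ^ 3 - 7 * u).smul
      (a := 495 / 2048) (by norm_num)).add
    (((sumNonneg_zonal 3 fun u => 221 * u ^ 6 - 195 * u ^ 4 + 39 * u ^ 2 - 1).smul
      (a := 1155 / 8192) (by norm_num)).add
    (((sumNonneg_zonal 4 fun u => 17 * u ^ 5 - 10 * u ^ 3 + u).smul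
      (a := 45045 / 4096) (by norm_num)).add
    (((sumNonneg_zonal 5 fun u => 85 * u ^ 4 - 30 * u ^ 2 + 1).smul
      (a := 1287 / 8192) (by norm_num)).add
    (((sumNonneg_zonal 6 fun u => 17 * u ^ 3 - 3 * u).smul (a := 2145 / 2048) (by norm_num)).add
    (((sumNonneg_zonal 7 fun u => 17 * u ^ 2 - 1).smul (a := 6435 / 32768) (by norm_num)).add
    (((sumNonneg_zonal 8 fun u => u).smul (a := 109395 / 16384) (by norm_num)).add
    ((sumNonneg_zonal 9 fun _ => 1).smul (a := 12155 / 32768) (by norm_num))))))))))).congr ?_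
  intro x y _ _
  rw [inner_coords]
  simp only [zonal, legendre9]
  -- the identity is polynomial in the two heights and the planar inner product
  generalize x 0 * y 0 + x 1 * y 1 = c
  generalize x 2 = u
  generalize y 2 = v
  simp only [chebR]
  ring

/-! ### The test polynomial -/

/-- The polynomial of Delsarte type used in the proof: a combination of Legendre polynomials with
positive coefficients and constant term `1`. -/
def testFun (t : ℝ) : ℝ :=
  1 + 77 / 50 * t + 699 / 200 * ((3 * t ^ 2 - 1) / 2) + 157 / 100 * ((5 * t ^ 3 - 3 * t) / 2)
    + 99 / 50 * ((35 * t ^ 4 - 30 * t ^ 2 + 3) / 8) + 57 / 200 * legendre9 t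

lemma card_sq_le_sum_testFun (s : Finset E3) (hs : ∀ x ∈ s, ‖x‖ = 1) :
    (s.card : ℝ) ^ 2 ≤ ∑ x ∈ s, ∑ y ∈ s, testFun (inner ℝ x y) := by
  have h := ((((sumNonneg_legendre1.smul (a := 77 / 50) (by norm_num)).add
    (sumNonneg_legendre2.smul (a := 699 / 200) (by norm_num))).add
    (sumNonneg_legendre3.smul (a := 157 / 100) (by norm_num))).add
    (sumNonneg_legendre4.smul (a := 99 / 50) (by norm_num))).add
    (sumNonneg_legendre9.smul (a := 57 / 200) (by norm_num)) s hs
  have e : ∑ x ∈ s, ∑ y ∈ s, testFun (inner ℝ x y) = (s.card : ℝ) ^ 2 +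
      ∑ x ∈ s, ∑ y ∈ s, (testFun (inner ℝ x y) - 1) := by
    simp only [Finset.sum_sub_distrib, Finset.sum_const, nsmul_eq_mul, mul_one]
    ring
  rw [e]
  refine le_add_of_nonneg_right (h.trans_eq ?_)
  refine Finset.sum_congr rfl fun x _ => Finset.sum_congr rfl fun y _ => ?_
  unfold testFun
  ring

/-! ### Polynomial inequalities on intervals

On each interval, `x` and `y` are the distances to its two endpoints, up to scaling. Written as a
form in `x` and `y` (the Bernstein basis), the polynomial in question has positive coefficients. -/

lemma testFun_nonpos_a {t : ℝ} (h1 : -(3 / 5) ≤ t) (h2 : t ≤ -(3 / 10)) :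
    testFun t ≤ 0 := by
  obtain ⟨x, hx⟩ : ∃ x, x = 10 * t - (-6) := ⟨_, rfl⟩
  obtain ⟨y, hy⟩ : ∃ y, y = (-3) - 10 * t := ⟨_, rfl⟩
  have hx0 : 0 ≤ x := by linarith
  have hy0 : 0 ≤ y := by linarith
  have key : 100776960000000000 * (-testFun t) =
    70147244032 * y ^ 9 + 1367869292544 * x * y ^ 8 + 4898119999488 * x ^ 2 * y ^ 7
      + 6942051188736 * x ^ 3 * y ^ 6 + 4214097341952 * x ^ 4 * y ^ 5
      + 854673413376 * x ^ 5 * y ^ 4 + 327235948992 * x ^ 6 * y ^ 3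
      + 620780337984 * x ^ 7 * y ^ 2 + 334249509498 * x ^ 8 * y + 55748397061 * x ^ 9 := by
    rw [hx, hy]; unfold testFun legendre9; ring
  have hpos : 0 ≤ 100776960000000000 * (-testFun t) := by
    rw [key]; positivity
  linarith

lemma testFun_nonpos_b {t : ℝ} (h1 : -(3 / 10) ≤ t) (h2 : t ≤ 0) : testFun t ≤ 0 := by
  obtain ⟨x, hx⟩ : ∃ x, x = 10 * t - (-3) := ⟨_, rfl⟩
  obtain ⟨y, hy⟩ : ∃ y, y = 0 - 10 * t := ⟨_, rfl⟩
  have hx0 : 0 ≤ x := by linarith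
  have hy0 : 0 ≤ y := by linarith
  have key : 100776960000000000 * (-testFun t) =
    55748397061 * y ^ 9 + 669221637600 * x * y ^ 8 + 3300557362800 * x ^ 2 * y ^ 7
      + 8390666544000 * x ^ 3 * y ^ 6 + 11718378636000 * x ^ 4 * y ^ 5
      + 8935060800000 * x ^ 5 * y ^ 4 + 3423708000000 * x ^ 6 * y ^ 3
      + 530976000000 * x ^ 7 * y ^ 2 + 55860000000 * x ^ 8 * y + 25600000000 * x ^ 9 := by
    rw [hx, hy]; unfold testFun legendre9; ring
  have hpos : 0 ≤ 100776960000000000 * (-testFun t) := by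
    rw [key]; positivity
  linarith

lemma testFun_nonpos_c {t : ℝ} (h1 : 0 ≤ t) (h2 : t ≤ 1 / 2) : testFun t ≤ 0 := by
  obtain ⟨x, hx⟩ : ∃ x, x = 2 * t - 0 := ⟨_, rfl⟩
  obtain ⟨y, hy⟩ : ∃ y, y = 1 - 2 * t := ⟨_, rfl⟩
  have hx0 : 0 ≤ x := by linarith
  have hy0 : 0 ≤ y := by linarith
  have key : 13107200 * (-testFun t) =
    65536 * y ^ 9 + 1334528 * x * y ^ 8 + 15468544 * x ^ 2 * y ^ 7 + 86841088 * x ^ 3 * y ^ 6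
      + 255586816 * x ^ 4 * y ^ 5 + 415124960 * x ^ 5 * y ^ 4 + 369282944 * x ^ 6 * y ^ 3
      + 166051568 * x ^ 7 * y ^ 2 + 29673184 * x ^ 8 * y + 32045 * x ^ 9 := by
    rw [hx, hy]; unfold testFun legendre9; ring
  have hpos : 0 ≤ 13107200 * (-testFun t) := by
    rw [key]; positivity
  linarith

lemma testFun_low {u : ℝ} (h1 : 3 / 5 ≤ u) (h2 : u ≤ 5 / 6) :
    testFun (-u) * ((5 * u - 3) ^ 2 + 7 * (1 - u ^ 2) + 14 / 5 * (1 - u ^ 2) ^ 2) ≤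
      25 / 8 * (5 * u - 3) ^ 2 := by
  obtain ⟨x, hx⟩ : ∃ x, x = 30 * u - 18 := ⟨_, rfl⟩
  obtain ⟨y, hy⟩ : ∃ y, y = 25 - 30 * u := ⟨_, rfl⟩
  have hx0 : 0 ≤ x := by linarith
  have hy0 : 0 ≤ y := by linarith
  have key : 941545921457490048000000000000000 * (25 / 8 * (5 * u - 3) ^ 2 -
      testFun (-u) * ((5 * u - 3) ^ 2 + 7 * (1 - u ^ 2) + 14 / 5 * (1 - u ^ 2) ^ 2)) =
    749161225977700810752 * y ^ 13 + 3226400034761657548800 * x * y ^ 12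
      + 2234049055070994432000 * x ^ 2 * y ^ 11 + 11345025761526325248000 * x ^ 3 * y ^ 10
      + 164839803671547482112000 * x ^ 4 * y ^ 9 + 710518479332184460800000 * x ^ 5 * y ^ 8
      + 1643015542256105241600000 * x ^ 6 * y ^ 7 + 2406770948223163944000000 * x ^ 7 * y ^ 6
      + 2374633866780026640000000 * x ^ 8 * y ^ 5 + 1604143977632676956250000 * x ^ 9 * y ^ 4
      + 730959817484428031250000 * x ^ 10 * y ^ 3 + 213673139518181132812500 * x ^ 11 * y ^ 2
      + 35833470462120410156250 * x ^ 12 * y + 2587744907988525390625 * x ^ 13 := by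
    rw [hx, hy]; unfold testFun legendre9; ring
  have hpos : 0 ≤ 941545921457490048000000000000000 * (25 / 8 * (5 * u - 3) ^ 2 -
      testFun (-u) * ((5 * u - 3) ^ 2 + 7 * (1 - u ^ 2) + 14 / 5 * (1 - u ^ 2) ^ 2)) := by
    rw [key]; positivity
  linarith

lemma testFun_mid {u : ℝ} (h1 : 5 / 6 ≤ u) (h2 : u ≤ 23 / 25) :
    testFun (-u) ≤ 25 / 8 * (2 * u ^ 2 - 1) := by
  obtain ⟨x, hx⟩ : ∃ x, x = 150 * u - 125 := ⟨_, rfl⟩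
  obtain ⟨y, hy⟩ : ∃ y, y = 138 - 150 * u := ⟨_, rfl⟩
  have hx0 : 0 ≤ x := by linarith
  have hy0 : 0 ≤ y := by linarith
  have key : 695761203862530000000000000000000 * (25 / 8 * (2 * u ^ 2 - 1) - testFun (-u)) =
    10186422867584228515625 * y ^ 9 + 89762525352355957031250 * x * y ^ 8
      + 339971119622578125000000 * x ^ 2 * y ^ 7 + 723701890646296875000000 * x ^ 3 * y ^ 6
      + 947392459483702500000000 * x ^ 4 * y ^ 5 + 780807932809504920000000 * x ^ 5 * y ^ 4
      + 395424943525128960000000 * x ^ 6 * y ^ 3 + 112578986495910620160000 * x ^ 7 * y ^ 2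
      + 13988522153775071232000 * x ^ 8 * y + 112132838511734095872 * x ^ 9 := by
    rw [hx, hy]; unfold testFun legendre9; ring
  have hpos : 0 ≤ 695761203862530000000000000000000 *
      (25 / 8 * (2 * u ^ 2 - 1) - testFun (-u)) := by
    rw [key]; positivity
  linarith

lemma testFun_high_a {u : ℝ} (h1 : 23 / 25 ≤ u) (h2 : u ≤ 19 / 20) :
    testFun (-u) * (7 * (8 * u - 5) ^ 2 + 100 * (1 - u ^ 2)) ≤
      25 / 8 * (7 * (8 * u - 5) ^ 2) := by
  obtain ⟨x, hx⟩ : ∃ x, x = 100 * u - 92 := ⟨_, rfl⟩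
  obtain ⟨y, hy⟩ : ∃ y, y = 95 - 100 * u := ⟨_, rfl⟩
  have hx0 : 0 ≤ x := by linarith
  have hy0 : 0 ≤ y := by linarith
  have key : 2267481600000000000000000000000 * (25 / 8 * (7 * (8 * u - 5) ^ 2) -
      testFun (-u) * (7 * (8 * u - 5) ^ 2 + 100 * (1 - u ^ 2))) =
    54607306178187942619512832 * y ^ 11 + 563508665958792192925368320 * x * y ^ 10
      + 2628455151202886985711616000 * x ^ 2 * y ^ 9
      + 7311405717188092361441280000 * x ^ 3 * y ^ 8
      + 13468188628596463029657600000 * x ^ 4 * y ^ 7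
      + 17240021174618624051558400000 * x ^ 5 * y ^ 6
      + 15637149930722414941344000000 * x ^ 6 * y ^ 5
      + 10042574256895772709600000000 * x ^ 7 * y ^ 4
      + 4471941073714723317843750000 * x ^ 8 * y ^ 3
      + 1314057802004261560585937500 * x ^ 9 * y ^ 2 + 229202072679088827617187500 * x ^ 10 * y
      + 17976546428224304248046875 * x ^ 11 := by
    rw [hx, hy]; unfold testFun legendre9; ring
  have hpos : 0 ≤ 2267481600000000000000000000000 * (25 / 8 * (7 * (8 * u - 5) ^ 2) -
      testFun (-u) * (7 * (8 * u - 5) ^ 2 + 100 * (1 - u ^ 2))) := by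
    rw [key]; positivity
  linarith

lemma testFun_high_b {u : ℝ} (h1 : 19 / 20 ≤ u) (h2 : u ≤ 1) :
    testFun (-u) * (7 * (8 * u - 5) ^ 2 + 100 * (1 - u ^ 2)) ≤
      25 / 8 * (7 * (8 * u - 5) ^ 2) := by
  obtain ⟨x, hx⟩ : ∃ x, x = 20 * u - 19 := ⟨_, rfl⟩
  obtain ⟨y, hy⟩ : ∃ y, y = 20 - 20 * u := ⟨_, rfl⟩
  have hx0 : 0 ≤ x := by linarith
  have hy0 : 0 ≤ y := by linarith
  have key : 262144000000000000 * (25 / 8 * (7 * (8 * u - 5) ^ 2) -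
      testFun (-u) * (7 * (8 * u - 5) ^ 2 + 100 * (1 - u ^ 2))) =
    368159670850033751 * y ^ 11 + 2975919597488091380 * x * y ^ 10
      + 10121806292356116300 * x ^ 2 * y ^ 9 + 18553518512993090000 * x ^ 3 * y ^ 8
      + 19840635985838336000 * x ^ 4 * y ^ 7 + 14791800085973760000 * x ^ 5 * y ^ 6
      + 15591512536422400000 * x ^ 6 * y ^ 5 + 23653859236864000000 * x ^ 7 * y ^ 4
      + 25243374551040000000 * x ^ 8 * y ^ 3 + 15717356339200000000 * x ^ 9 * y ^ 2
      + 5270142976000000000 * x ^ 10 * y + 743178240000000000 * x ^ 11 := by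
    rw [hx, hy]; unfold testFun legendre9; ring
  have hpos : 0 ≤ 262144000000000000 * (25 / 8 * (7 * (8 * u - 5) ^ 2) -
      testFun (-u) * (7 * (8 * u - 5) ^ 2 + 100 * (1 - u ^ 2))) := by
    rw [key]; positivity
  linarith

/-! ### Points in a cap -/

/-- If the vectors `(h/√7, p, q, √(2/5) b (p² - q²), 2 √(2/5) b p q)` of `ℝ⁵` have pairwise
nonpositive inner products, then the squared cosines of their angles with the first axis sum to at
most `1`: compare the norm of `∑ (h i / n i) • w i` with its first coordinate. -/
lemma sum_cos_sq_le_one {ι : Type*} (s : Finset ι) (h p q b n : ι → ℝ)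
    (hn : ∀ i ∈ s, n i = h i ^ 2 + 7 * (p i ^ 2 + q i ^ 2)
      + 14 / 5 * b i ^ 2 * (p i ^ 2 + q i ^ 2) ^ 2)
    (hpos : ∀ i ∈ s, 0 < n i) (hh : ∀ i ∈ s, 0 ≤ h i)
    (hpair : ∀ i ∈ s, ∀ j ∈ s, i ≠ j →
      h i * h j + 7 * (p i * p j + q i * q j) + 14 / 5 * (b i * b j) *
        (2 * (p i * p j + q i * q j) ^ 2 - (p i ^ 2 + q i ^ 2) * (p j ^ 2 + q j ^ 2)) ≤ 0) :
    ∑ i ∈ s, h i ^ 2 / n i ≤ 1 := by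
  set T := ∑ i ∈ s, h i ^ 2 / n i with hT
  let l : ι → ℝ := fun i => h i / n i
  have hl : ∀ i ∈ s, 0 ≤ l i := fun i hi => div_nonneg (hh i hi) (hpos i hi).le
  -- the squared norm of `∑ l i • w i`, expanded over pairs
  let G : ι → ι → ℝ := fun i j => h i * h j + 7 * (p i * p j + q i * q j) + 14 / 5 * (b i * b j) *
        (2 * (p i * p j + q i * q j) ^ 2 - (p i ^ 2 + q i ^ 2) * (p j ^ 2 + q j ^ 2))
  have hexp : ∑ i ∈ s, ∑ j ∈ s, l i * l j * G i j =
      (∑ i ∈ s, l i * h i) ^ 2 + 7 * (∑ i ∈ s, l i * p i) ^ 2 + 7 * (∑ i ∈ s, l i * q i) ^ 2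
      + 14 / 5 * (∑ i ∈ s, l i * (b i * (p i ^ 2 - q i ^ 2))) ^ 2
      + 14 / 5 * (∑ i ∈ s, l i * (b i * (2 * p i * q i))) ^ 2 := by
    have hsq : ∀ g : ι → ℝ, (∑ i ∈ s, g i) ^ 2 = ∑ i ∈ s, ∑ j ∈ s, g i * g j := fun g => by
      rw [pow_two, Finset.sum_mul_sum]
    simp only [hsq, Finset.mul_sum, ← Finset.sum_add_distrib]
    refine Finset.sum_congr rfl fun i _ => Finset.sum_congr rfl fun j _ => ?_
    simp only [G]
    ring
  have hlow : T ^ 2 ≤ ∑ i ∈ s, ∑ j ∈ s, l i * l j * G i j := by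
    have : ∑ i ∈ s, l i * h i = T := by
      refine Finset.sum_congr rfl fun i _ => ?_
      simp only [l]; ring
    rw [hexp, this]
    nlinarith [sq_nonneg (∑ i ∈ s, l i * p i), sq_nonneg (∑ i ∈ s, l i * q i),
      sq_nonneg (∑ i ∈ s, l i * (b i * (p i ^ 2 - q i ^ 2))),
      sq_nonneg (∑ i ∈ s, l i * (b i * (2 * p i * q i)))]
  have hup : ∑ i ∈ s, ∑ j ∈ s, l i * l j * G i j ≤ T := by
    refine Finset.sum_le_sum fun i hi => ?_
    rw [← Finset.add_sum_erase s _ hi]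
    have h1 : l i * l i * G i i = h i ^ 2 / n i := by
      have : G i i = n i := by simp only [G]; rw [hn i hi]; ring
      rw [this]
      have := (hpos i hi).ne'
      simp only [l]
      field_simp
    have h2 : ∑ j ∈ s.erase i, l i * l j * G i j ≤ 0 := by
      refine Finset.sum_nonpos fun j hj => ?_
      have hj' := Finset.mem_of_mem_erase hj
      exact mul_nonpos_of_nonneg_of_nonpos (mul_nonneg (hl i hi) (hl j hj'))
        (hpair i hi j hj' (Finset.ne_of_mem_erase hj).symm)
    linarith
  nlinarith [hlow.trans hup]

/-- The first coordinate (times `√7`) of the vector attached to a point at height `u`. -/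
def capH (u : ℝ) : ℝ :=
  if u < 5 / 6 then 5 * u - 3
  else if u < 23 / 25 then √(7 * (u ^ 2 - 1 / 2)) else 7 * (8 * u - 5) / 10

/-- Indicator of the low range of heights, where a second harmonic is added to the vector. -/
def capB (u : ℝ) : ℝ := if u < 5 / 6 then 1 else 0

/-- Squared norm (times `7`) of the vector attached to a point at height `u`. -/
def capN (u : ℝ) : ℝ :=
  capH u ^ 2 + 7 * (1 - u ^ 2) + 14 / 5 * capB u ^ 2 * (1 - u ^ 2) ^ 2

lemma capH_pos {u : ℝ} (hu : 3 / 5 < u) : 0 < capH u := by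
  unfold capH
  split_ifs with h1 h2
  · linarith
  · exact Real.sqrt_pos.2 (by nlinarith)
  · linarith

lemma capN_pos {u : ℝ} (hu : 3 / 5 < u) (hu1 : u ≤ 1) : 0 < capN u := by
  have h1 := capH_pos hu
  have h2 : 0 ≤ 1 - u ^ 2 := by nlinarith
  unfold capN
  positivity

/-- On the cap, the test polynomial is dominated by the squared cosine controlled by
`sum_cos_sq_le_one`. -/
lemma testFun_le_cap {u : ℝ} (hu : 3 / 5 < u) (hu1 : u ≤ 1) :
    testFun (-u) ≤ 25 / 8 * (capH u ^ 2 / capN u) := by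
  rw [mul_div_assoc', le_div_iff₀ (capN_pos hu hu1)]
  unfold capN capH capB
  split_ifs with h1 h2
  · have := testFun_low hu.le h1.le
    linarith
  · push Not at h1
    have := testFun_mid h1 h2.le
    rw [Real.sq_sqrt (by nlinarith)]
    nlinarith
  · push Not at h2
    rcases le_total u (19 / 20) with h3 | h3
    · have := testFun_high_a h2 h3
      linarith
    · have := testFun_high_b h3 hu1
      linarith

/-- The inequality behind the case of two low heights. For fixed `u + v` the difference of the two
sides is monotone in `u v`, so the worst case is `u = v`. -/
lemma low_low_aux {u v : ℝ} (hu : 3 / 5 ≤ u) (hu1 : u ≤ 5 / 6) (hv : 3 / 5 ≤ v)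
    (hv1 : v ≤ 5 / 6) :
    (5 / 6 - u) * (5 / 6 - v) ≤ 7 / 45 * (1 / 2 - (u - v) ^ 2 - u ^ 2 * v ^ 2) := by
  obtain ⟨m, hm⟩ : ∃ m, m = (u + v) / 2 := ⟨_, rfl⟩
  obtain ⟨P, hP⟩ : ∃ P, P = u * v := ⟨_, rfl⟩
  have hm1 : 3 / 5 ≤ m := by linarith
  have hm2 : m ≤ 5 / 6 := by linarith
  have hP0 : 0 ≤ P := by rw [hP]; nlinarith
  have hPm : P ≤ m ^ 2 := by rw [hP, hm]; nlinarith [sq_nonneg (u - v)]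
  have hP2 : P ^ 2 ≤ m ^ 4 := by nlinarith
  have hdiag : (5 / 6 - m) ^ 2 ≤ 7 / 45 * (1 / 2 - m ^ 4) := by
    have k := mul_nonneg (sub_nonneg.2 hm1) (sub_nonneg.2 hm2)
    nlinarith [mul_nonneg k (sq_nonneg m), mul_nonneg k (show 0 ≤ m by linarith)]
  have e : 7 / 45 * (1 / 2 - (u - v) ^ 2 - u ^ 2 * v ^ 2) - (5 / 6 - u) * (5 / 6 - v) =
      7 / 90 - 25 / 36 + 5 / 3 * m - 28 / 45 * m ^ 2 - 17 / 45 * P - 7 / 45 * P ^ 2 := by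
    rw [hm, hP]; ring
  nlinarith

/-- Two heights are compatible with angular distance at least `60°` only if
`u² + v² - u v ≤ 3/4`. -/
lemma heights_compatible {u v c : ℝ} (huv : 1 / 2 ≤ u * v) (hc : c ≤ 1 / 2 - u * v)
    (hc2 : c ^ 2 ≤ (1 - u ^ 2) * (1 - v ^ 2)) : u ^ 2 + v ^ 2 - u * v ≤ 3 / 4 := by
  nlinarith

/-- The vectors attached to two points of the cap at heights `u ≤ v`, whose planar projections have
inner product `c`, have nonpositive inner product: `hc` is the separation of the two points, `hc2`
the Cauchy-Schwarz inequality for the projections. -/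
lemma cap_pair_of_le {u v c : ℝ} (hu : 3 / 5 < u) (huv : u ≤ v) (hv1 : v ≤ 1)
    (hc : c ≤ 1 / 2 - u * v) (hc2 : c ^ 2 ≤ (1 - u ^ 2) * (1 - v ^ 2)) :
    capH u * capH v + 7 * c + 14 / 5 * (capB u * capB v) *
      (2 * c ^ 2 - (1 - u ^ 2) * (1 - v ^ 2)) ≤ 0 := by
  have hH : ∀ w : ℝ, 5 / 6 ≤ w → 0 ≤ 7 * (w ^ 2 - 1 / 2) := fun w hw => by nlinarith
  unfold capH capB
  by_cases hu1 : u < 5 / 6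
  · by_cases hv : v < 5 / 6
    · simp only [hu1, hv, if_true]
      -- the left side is convex in `c`, which ranges over `[-r, 1/2 - u v]`
      obtain ⟨r, hr0, hr⟩ : ∃ r : ℝ, 0 ≤ r ∧ r ^ 2 = (1 - u ^ 2) * (1 - v ^ 2) :=
        ⟨√((1 - u ^ 2) * (1 - v ^ 2)), Real.sqrt_nonneg _,
          Real.sq_sqrt (mul_nonneg (by nlinarith) (by nlinarith))⟩
      have hcr : -r ≤ c := by nlinarith
      have hr1 : 11 / 36 ≤ r := by
        apply le_of_sq_le_sq _ hr0
        rw [hr, pow_two]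
        exact mul_le_mul (by nlinarith) (by nlinarith) (by norm_num) (by nlinarith)
      have hr2 : r ≤ 16 / 25 := by
        apply le_of_sq_le_sq _ (by norm_num)
        rw [hr, pow_two (16 / 25 : ℝ)]
        exact mul_le_mul (by nlinarith) (by nlinarith) (by nlinarith) (by norm_num)
      have hend1 : (5 * u - 3) * (5 * v - 3) - 7 * r + 14 / 5 * r ^ 2 ≤ 0 := by
        have : (5 * u - 3) * (5 * v - 3) ≤ 49 / 36 := by nlinarith
        nlinarith
      have hend2 : (5 * u - 3) * (5 * v - 3) + 7 * (1 / 2 - u * v) +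
          14 / 5 * (2 * (1 / 2 - u * v) ^ 2 - r ^ 2) ≤ 0 := by
        have := low_low_aux hu.le hu1.le (hu.le.trans huv) hv.le
        rw [hr]; nlinarith
      rw [← hr]
      -- chord bound for the convex function of `c`
      have hm : 0 < r + (1 / 2 - u * v) ∨ r + (1 / 2 - u * v) = 0 := by
        rcases (show 0 ≤ r + (1 / 2 - u * v) by linarith).lt_or_eq with h | h
        · exact Or.inl h
        · exact Or.inr h.symm
      rcases hm with hm | hm
      · have k1 := mul_nonneg (show 0 ≤ c + r by linarith) (sub_nonneg.2 hend2)
        have k2 := mul_nonneg (show 0 ≤ 1 / 2 - u * v - c by linarith) (sub_nonneg.2 hend1)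
        have k3 := mul_nonneg (mul_nonneg (show 0 ≤ c + r by linarith)
          (show 0 ≤ 1 / 2 - u * v - c by linarith)) hm.le
        by_contra hcon
        push Not at hcon
        have k4 := mul_pos hm hcon
        nlinarith
      · have : c = -r := by linarith
        rw [this]; nlinarith
    · push Not at hv
      by_cases hv2 : v < 23 / 25
      · simp only [hu1, not_lt.2 hv, hv2, if_true, if_false]
        have huv2 : 1 / 2 ≤ u * v := by nlinarith
        have key : (5 * u - 3) * √(7 * (v ^ 2 - 1 / 2)) ≤ 7 * (u * v - 1 / 2) := by
          apply le_of_sq_le_sq _ (by linarith)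
          rw [mul_pow, Real.sq_sqrt (hH v hv)]
          have e : (7 * (u * v - 1 / 2)) ^ 2 - (5 * u - 3) ^ 2 * (7 * (v ^ 2 - 1 / 2)) =
              126 * ((v - 5 / 6) * ((v - u) * (5 / 6 * u - 1 / 2)
                + (5 / 6 - u) * (u * v - 1 / 2))) := by ring
          have : 0 ≤ (v - 5 / 6) * ((v - u) * (5 / 6 * u - 1 / 2)
                + (5 / 6 - u) * (u * v - 1 / 2)) := by
            apply mul_nonneg (by linarith)
            apply add_nonneg <;> apply mul_nonneg <;> linarith
          linarith
        linarith
      · simp only [hu1, not_lt.2 hv, hv2, if_true, if_false]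
        push Not at hv2
        have huv2 : 1 / 2 ≤ u * v := by nlinarith
        have hcomp := heights_compatible huv2 hc hc2
        have hu45 : u ≤ 4 / 5 := by nlinarith
        nlinarith [mul_nonneg (show 0 ≤ 6 * v - 5 by linarith) (show 0 ≤ 4 - 5 * u by linarith)]
  · push Not at hu1
    have hv : 5 / 6 ≤ v := hu1.trans huv
    have huv2 : 1 / 2 ≤ u * v := by nlinarith
    have hcomp := heights_compatible huv2 hc hc2
    have hv2 : v < 23 / 25 := by nlinarith
    simp only [not_lt.2 hu1, not_lt.2 hv, hv2, huv.trans_lt hv2, if_true, if_false]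
    have key : √(7 * (u ^ 2 - 1 / 2)) * √(7 * (v ^ 2 - 1 / 2)) ≤ 7 * (u * v - 1 / 2) := by
      apply le_of_sq_le_sq _ (by linarith)
      rw [mul_pow, Real.sq_sqrt (hH u hu1), Real.sq_sqrt (hH v hv)]
      nlinarith [sq_nonneg (u - v)]
    linarith

lemma cap_pair {u v c : ℝ} (hu : 3 / 5 < u) (hu1 : u ≤ 1) (hv : 3 / 5 < v) (hv1 : v ≤ 1)
    (hc : c ≤ 1 / 2 - u * v) (hc2 : c ^ 2 ≤ (1 - u ^ 2) * (1 - v ^ 2)) :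
    capH u * capH v + 7 * c + 14 / 5 * (capB u * capB v) *
      (2 * c ^ 2 - (1 - u ^ 2) * (1 - v ^ 2)) ≤ 0 := by
  rcases le_total u v with h | h
  · exact cap_pair_of_le hu h hv1 hc hc2
  · have := cap_pair_of_le hv h hu1 (c := c) (by linarith) (by linarith)
    linarith

lemma testFun_nonpos {t : ℝ} (h1 : -(3 / 5) ≤ t) (h2 : t ≤ 1 / 2) : testFun t ≤ 0 := by
  rcases le_total t (-(3 / 10)) with h | h
  · exact testFun_nonpos_a h1 h
  · rcases le_total t 0 with h' | h'
    · exact testFun_nonpos_b h h'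
    · exact testFun_nonpos_c h' h2

/-- A unit vector extends to an orthonormal frame. -/
lemma exists_frame (x : E3) (hx : ‖x‖ = 1) : ∃ e f : E3, ∀ y z : E3,
    inner ℝ y z = inner ℝ x y * inner ℝ x z + (inner ℝ e y * inner ℝ e z
      + inner ℝ f y * inner ℝ f z) := by
  have hv : Orthonormal ℝ (Set.domRestrict ({0} : Set (Fin 3)) fun _ => x) := by
    constructor
    · intro i; exact hx
    · intro i j hij
      exact absurd (Subsingleton.elim i j) hij
  obtain ⟨b, hb⟩ := hv.exists_orthonormalBasis_extension_of_card_eq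
    (by simp)
  have hb0 : b 0 = x := hb 0 rfl
  refine ⟨b 1, b 2, fun y z => ?_⟩
  rw [← b.sum_inner_mul_inner y z, Fin.sum_univ_three, hb0, real_inner_comm x y,
    real_inner_comm (b 1) y, real_inner_comm (b 2) y]
  ring

/-- Each row sum of the test polynomial is at most `testFun 1 + 25 / 8`: only the points of the cap
around `-x` contribute positively besides `x` itself. -/
lemma sum_testFun_le (s : Finset E3) (hs : ∀ x ∈ s, ‖x‖ = 1)
    (hsep : ∀ x ∈ s, ∀ y ∈ s, x ≠ y → inner ℝ x y ≤ (1 / 2 : ℝ)) (x : E3) (hx : x ∈ s) :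
    ∑ y ∈ s, testFun (inner ℝ x y) ≤ testFun 1 + 25 / 8 := by
  obtain ⟨e, f, hef⟩ := exists_frame x (hs x hx)
  have hone : ∀ y ∈ s, (1 : ℝ) = inner ℝ y y := fun y hy => by
    rw [real_inner_self_eq_norm_sq, hs y hy]; norm_num
  have hpl : ∀ y ∈ s, inner ℝ e y ^ 2 + inner ℝ f y ^ 2 = 1 - (-inner ℝ x y : ℝ) ^ 2 := by
    intro y hy
    have := hef y y
    rw [← hone y hy] at this
    linarith
  have hle1 : ∀ y ∈ s, -inner ℝ x y ≤ (1 : ℝ) := by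
    intro y hy
    nlinarith [hpl y hy, sq_nonneg (inner ℝ e y : ℝ), sq_nonneg (inner ℝ f y : ℝ)]
  -- the cap of points at distance more than `arccos (-3/5)` from `x`
  let C := s.filter fun y => (inner ℝ x y : ℝ) < -(3 / 5)
  have hC : ∀ y ∈ C, y ∈ s ∧ 3 / 5 < (-inner ℝ x y : ℝ) := by
    intro y hy
    have := Finset.mem_filter.1 hy
    exact ⟨this.1, by linarith [this.2]⟩
  have hcap : ∑ y ∈ C, capH (-inner ℝ x y) ^ 2 / capN (-inner ℝ x y) ≤ 1 := by
    refine sum_cos_sq_le_one C (fun y => capH (-inner ℝ x y)) (fun y => inner ℝ e y)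
      (fun y => inner ℝ f y) (fun y => capB (-inner ℝ x y)) (fun y => capN (-inner ℝ x y))
      ?_ ?_ ?_ ?_
    · intro y hy
      simp only [hpl y (hC y hy).1, capN]
    · intro y hy
      exact capN_pos (hC y hy).2 (hle1 y (hC y hy).1)
    · intro y hy
      exact (capH_pos (hC y hy).2).le
    · intro y hy z hz hyz
      obtain ⟨hys, hyu⟩ := hC y hy
      obtain ⟨hzs, hzu⟩ := hC z hz
      have hsp := hsep y hys z hzs hyz
      rw [hef y z] at hsp
      have hcs : (inner ℝ e y * inner ℝ e z + inner ℝ f y * inner ℝ f z) ^ 2 ≤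
          (inner ℝ e y ^ 2 + inner ℝ f y ^ 2 : ℝ) * (inner ℝ e z ^ 2 + inner ℝ f z ^ 2) := by
        nlinarith [sq_nonneg (inner ℝ e y * inner ℝ f z - inner ℝ f y * inner ℝ e z : ℝ)]
      simp only [hpl y hys, hpl z hzs] at hcs ⊢
      exact cap_pair hyu (hle1 y hys) hzu (hle1 z hzs) (by linarith) hcs
  rw [← Finset.add_sum_erase s _ hx, ← hone x hx]
  have hrest : ∑ y ∈ s.erase x, testFun (inner ℝ x y) ≤
      ∑ y ∈ C, 25 / 8 * (capH (-inner ℝ x y) ^ 2 / capN (-inner ℝ x y)) := by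
    have hsub : C ⊆ s.erase x := by
      intro y hy
      refine Finset.mem_erase.2 ⟨?_, (hC y hy).1⟩
      rintro rfl
      have := (hC y hy).2
      rw [← hone y hx] at this
      linarith
    rw [← Finset.sum_sdiff hsub]
    have h1 : ∑ y ∈ s.erase x \ C, testFun (inner ℝ x y) ≤ 0 := by
      refine Finset.sum_nonpos fun y hy => ?_
      obtain ⟨hy1, hy2⟩ := Finset.mem_sdiff.1 hy
      obtain ⟨hyx, hys⟩ := Finset.mem_erase.1 hy1
      refine testFun_nonpos ?_ (hsep x hx y hys (Ne.symm hyx))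
      by_contra hlt
      exact hy2 (Finset.mem_filter.2 ⟨hys, not_le.1 hlt⟩)
    have h2 : ∑ y ∈ C, testFun (inner ℝ x y) ≤
        ∑ y ∈ C, 25 / 8 * (capH (-inner ℝ x y) ^ 2 / capN (-inner ℝ x y)) := by
      refine Finset.sum_le_sum fun y hy => ?_
      have := testFun_le_cap (hC y hy).2 (hle1 y (hC y hy).1)
      rwa [neg_neg] at this
    linarith
  rw [← Finset.mul_sum] at hrest
  linarith

lemma inner_le_half {x y : E3} (hx : ‖x‖ = 1) (hy : ‖y‖ = 1) (h : 1 ≤ ‖x - y‖) :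
    inner ℝ x y ≤ (1 / 2 : ℝ) := by
  have := norm_sub_sq_real x y
  rw [hx, hy] at this
  nlinarith

lemma card_le_twelve (s : Finset E3) (hs : ∀ x ∈ s, ‖x‖ = 1)
    (hsep : ∀ x ∈ s, ∀ y ∈ s, x ≠ y → 1 ≤ ‖x - y‖) : s.card ≤ 12 := by
  have h1 := card_sq_le_sum_testFun s hs
  have h2 : ∑ x ∈ s, ∑ y ∈ s, testFun (inner ℝ x y) ≤ ∑ x ∈ s, (testFun 1 + 25 / 8) :=
    Finset.sum_le_sum fun x hx => sum_testFun_le s hs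
      (fun x hx y hy hxy => inner_le_half (hs x hx) (hs y hy) (hsep x hx y hy hxy)) x hx
  rw [Finset.sum_const, nsmul_eq_mul] at h2
  have h3 : testFun 1 + 25 / 8 < 13 := by norm_num [testFun, legendre9]
  by_contra hcon
  have h4 : (13 : ℝ) ≤ s.card := by exact_mod_cast (by omega : 13 ≤ s.card)
  nlinarith

lemma finite_and_ncard_le (Z : Set E3) (hZ : ∀ z ∈ Z, ‖z‖ = 1)
    (hsep : ∀ z ∈ Z, ∀ z' ∈ Z, z ≠ z' → 1 ≤ ‖z - z'‖) : Z.Finite ∧ Z.ncard ≤ 12 := by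
  have hfin : Z.Finite := by
    by_contra hinf
    obtain ⟨t, htZ, htc⟩ := Set.Infinite.exists_subset_card_eq hinf 13
    have := card_le_twelve t (fun x hx => hZ x (htZ hx))
      (fun x hx y hy => hsep x (htZ hx) y (htZ hy))
    omega
  refine ⟨hfin, ?_⟩
  rw [Set.ncard_eq_toFinset_card Z hfin]
  exact card_le_twelve _ (fun x hx => hZ x (by simpa using hx))
    (fun x hx y hy => hsep x (by simpa using hx) y (by simpa using hy))

/-! ### The cuboctahedron -/

/-- The lattice vector with integer coordinates `a` in the basis `fccB`. -/
def fccVec (a : Fin 3 → ℤ) : E3 := ∑ i, (a i : ℝ) • fccB i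

/-- The quadratic form of the lattice in integer coordinates. -/
def fccForm (a : Fin 3 → ℤ) : ℤ :=
  a 0 ^ 2 + a 1 ^ 2 + a 2 ^ 2 + a 0 * a 1 + a 0 * a 2 + a 1 * a 2

lemma fccForm_two_mul (a : Fin 3 → ℤ) :
    2 * fccForm a = (a 1 + a 2) ^ 2 + (a 0 + a 2) ^ 2 + (a 0 + a 1) ^ 2 := by
  unfold fccForm; ring

lemma norm_sq_fccVec (a : Fin 3 → ℤ) : ‖fccVec a‖ ^ 2 = fccForm a := by
  have h2 : (√2 : ℝ)⁻¹ ^ 2 = 1 / 2 := by rw [inv_pow, Real.sq_sqrt (by norm_num)]; norm_num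
  rw [EuclideanSpace.norm_sq_eq, Fin.sum_univ_three]
  simp only [Real.norm_eq_abs, sq_abs]
  have c0 : fccVec a 0 = (√2 : ℝ)⁻¹ * (a 1 + a 2) := by
    simp [fccVec, fccB, toE3, Fin.sum_univ_three]; ring
  have c1 : fccVec a 1 = (√2 : ℝ)⁻¹ * (a 0 + a 2) := by
    simp [fccVec, fccB, toE3, Fin.sum_univ_three]; ring
  have c2 : fccVec a 2 = (√2 : ℝ)⁻¹ * (a 0 + a 1) := by
    simp [fccVec, fccB, toE3, Fin.sum_univ_three]; ring
  rw [c0, c1, c2]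
  simp only [mul_pow, h2, fccForm]
  push_cast
  ring

lemma fccForm_pos {a : Fin 3 → ℤ} (ha : a ≠ 0) : 1 ≤ fccForm a := by
  by_contra hcon
  have h := fccForm_two_mul a
  have h1 : a 1 + a 2 = 0 := by nlinarith [sq_nonneg (a 0 + a 2), sq_nonneg (a 0 + a 1)]
  have h2 : a 0 + a 2 = 0 := by nlinarith [sq_nonneg (a 1 + a 2), sq_nonneg (a 0 + a 1)]
  have h3 : a 0 + a 1 = 0 := by nlinarith [sq_nonneg (a 0 + a 2), sq_nonneg (a 1 + a 2)]
  apply ha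
  funext i
  fin_cases i <;> simp <;> omega

lemma fccVec_sub (a b : Fin 3 → ℤ) : fccVec a - fccVec b = fccVec (a - b) := by
  simp only [fccVec, ← Finset.sum_sub_distrib, Pi.sub_apply, Int.cast_sub, sub_smul]

lemma one_le_norm_fccVec_sub {a b : Fin 3 → ℤ} (hab : a ≠ b) :
    1 ≤ ‖fccVec a - fccVec b‖ := by
  have h := norm_sq_fccVec (a - b)
  have h1 : (1 : ℝ) ≤ fccForm (a - b) := by exact_mod_cast fccForm_pos (sub_ne_zero.2 hab)
  rw [fccVec_sub]
  nlinarith [norm_nonneg (fccVec (a - b))]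

lemma fccVec_injective : Function.Injective fccVec := by
  intro a b hab
  by_contra hne
  have := one_le_norm_fccVec_sub hne
  rw [hab, sub_self, norm_zero] at this
  linarith

/-- Coordinates of the twelve minimal vectors. -/
def minCoords : Finset (Fin 3 → ℤ) :=
  {![1, 0, 0], ![-1, 0, 0], ![0, 1, 0], ![0, -1, 0], ![0, 0, 1], ![0, 0, -1],
    ![1, -1, 0], ![-1, 1, 0], ![1, 0, -1], ![-1, 0, 1], ![0, 1, -1], ![0, -1, 1]}

lemma mem_minCoords_iff (a : Fin 3 → ℤ) : a ∈ minCoords ↔ fccForm a = 1 := by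
  constructor
  · intro h
    simp only [minCoords, Finset.mem_insert, Finset.mem_singleton] at h
    rcases h with h | h | h | h | h | h | h | h | h | h | h | h <;> subst h <;>
      simp [fccForm]
  · intro h
    have ha : a = ![a 0, a 1, a 2] := by
      funext i; fin_cases i <;> rfl
    rw [ha]
    unfold fccForm at h
    generalize a 0 = x at *
    generalize a 1 = y at *
    generalize a 2 = z at *
    clear ha
    have hx1 : x ≤ 1 := by
      nlinarith [sq_nonneg (x + 2 * y), sq_nonneg (x + 2 * z), sq_nonneg (y + z),
        sq_nonneg (x + y + z)]
    have hx2 : -1 ≤ x := by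
      nlinarith [sq_nonneg (x + 2 * y), sq_nonneg (x + 2 * z), sq_nonneg (y + z),
        sq_nonneg (x + y + z)]
    have hy1 : y ≤ 1 := by
      nlinarith [sq_nonneg (y + 2 * x), sq_nonneg (y + 2 * z), sq_nonneg (x + z),
        sq_nonneg (x + y + z)]
    have hy2 : -1 ≤ y := by
      nlinarith [sq_nonneg (y + 2 * x), sq_nonneg (y + 2 * z), sq_nonneg (x + z),
        sq_nonneg (x + y + z)]
    have hz1 : z ≤ 1 := by
      nlinarith [sq_nonneg (z + 2 * x), sq_nonneg (z + 2 * y), sq_nonneg (y + x),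
        sq_nonneg (x + y + z)]
    have hz2 : -1 ≤ z := by
      nlinarith [sq_nonneg (z + 2 * x), sq_nonneg (z + 2 * y), sq_nonneg (y + x),
        sq_nonneg (x + y + z)]
    interval_cases x <;> interval_cases y <;> interval_cases z <;>
      first
        | (exfalso; omega)
        | simp [minCoords]

lemma Qco_eq_image : Qco = fccVec '' (minCoords : Set (Fin 3 → ℤ)) := by
  ext x
  simp only [Qco, Lfcc, Set.mem_inter_iff, Set.mem_ofPred_eq, Set.mem_image, Finset.mem_coe,
    mem_minCoords_iff]
  constructor
  · rintro ⟨⟨a, rfl⟩, hn⟩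
    refine ⟨a, ?_, rfl⟩
    have := norm_sq_fccVec a
    rw [fccVec, hn] at this
    exact_mod_cast (by linarith : (fccForm a : ℝ) = 1)
  · rintro ⟨a, ha, rfl⟩
    refine ⟨⟨a, rfl⟩, ?_⟩
    have := norm_sq_fccVec a
    rw [ha, Int.cast_one] at this
    exact (pow_eq_one_iff_of_nonneg (norm_nonneg _) two_ne_zero).1 this

lemma card_minCoords : minCoords.card = 12 := by
  unfold minCoords
  decide

/-- The kissing number in dimension 3 is 12: any set of unit vectors with pairwise distances
at least 1 has at most 12 elements, and the bound is attained by `Q_co = L_fcc ∩ S²`. -/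
theorem kissing_number_three :
    (∀ Z : Set E3, (∀ z ∈ Z, ‖z‖ = 1) →
      (∀ z ∈ Z, ∀ z' ∈ Z, z ≠ z' → 1 ≤ ‖z - z'‖) → Z.Finite ∧ Z.ncard ≤ 12) ∧
    (Qco.ncard = 12 ∧ (∀ z ∈ Qco, ‖z‖ = 1) ∧
      ∀ z ∈ Qco, ∀ z' ∈ Qco, z ≠ z' → 1 ≤ ‖z - z'‖) := by
  refine ⟨finite_and_ncard_le, ?_, fun z hz => hz.2, ?_⟩
  · rw [Qco_eq_image, Set.ncard_image_of_injective _ fccVec_injective, Set.ncard_coe_finset,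
      card_minCoords]
  · rw [Qco_eq_image]
    rintro _ ⟨a, -, rfl⟩ _ ⟨b, -, rfl⟩ hne
    exact one_le_norm_fccVec_sub fun hab => hne (by rw [hab])

end
end
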